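/- arXiv:2201.01844 — 2 statements merged into one kernel-verified Lean document; each statement's English description precedes it below -/
import Mathlib

section
/- There is a universal constant C > 0 such that for every finite set D of n disks in the plane in general position and every integer k ≥ 1, the number of points p ∈ ℝ² that lie on the boundary circles of two distinct disks of D and satisfy depth_D(p) ≤ k is at most C·n·k. -/
open Metric Set
open scoped Classical

noncomputable section

abbrev Plane : Type := EuclideanSpace ℝ (Fin 2)

/-- A disk is a closed ball of positive radius in the plane. -/
def IsDisk (d : Set Plane) : Prop :=
  ∃ (c : Plane) (r : ℝ), 0 < r ∧ d = Metric.closedBall c r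

/-- The depth of a point `p` in a finite family `D` of disks:
the number of disks of `D` containing `p`. -/
def diskDepth (D : Finset (Set Plane)) (p : Plane) : ℕ :=
  {d : Set Plane | d ∈ D ∧ p ∈ d}.ncard

/-- General position: no two boundary circles are tangent (meet in exactly one
point), and no three boundary circles pass through a common point.  (All disks
are automatically distinct, since `D` is a finite set of point sets.) -/
def GeneralPosition (D : Finset (Set Plane)) : Prop :=
  (∀ d₁ ∈ D, ∀ d₂ ∈ D, d₁ ≠ d₂ → ¬ ∃ p : Plane, frontier d₁ ∩ frontier d₂ = {p}) ∧
  (∀ d₁ ∈ D, ∀ d₂ ∈ D, ∀ d₃ ∈ D, d₁ ≠ d₂ → d₁ ≠ d₃ → d₂ ≠ d₃ →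
      frontier d₁ ∩ frontier d₂ ∩ frontier d₃ = ∅)

/-- The intersection graph of a finite family of disks: two distinct disks are
adjacent iff they intersect. -/
def IG (D : Finset (Set Plane)) : SimpleGraph {d // d ∈ D} :=
  SimpleGraph.fromRel (fun d₁ d₂ => (d₁.1 ∩ d₂.1).Nonempty)

/-- The ε-safe zone for disks `D` and attack set `B`: the set of points `p`
with `depth_{D∖B}(p) ≥ ε·depth_D(p)`. -/
def SafeZone (ε : ℝ) (D B : Finset (Set Plane)) : Set Plane :=
  {p | ε * (diskDepth D p : ℝ) ≤
        (({d : Set Plane | d ∈ D ∧ d ∉ B ∧ p ∈ d}).ncard : ℝ)}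

/-- Two points are ε-safely connected if they lie in the same topological
connected component of the ε-safe zone. -/
def SafelyConnected (ε : ℝ) (D B : Finset (Set Plane)) (p q : Plane) : Prop :=
  q ∈ connectedComponentIn (SafeZone ε D B) p

/-!
On a line, the power functions `dist p c ^ 2 - r ^ 2` of the circles differ by affine functions
whose slopes are ordered like the projections of the centers, so the cells of the power diagram meet
the line in that order. Sweep such a line across the plane: by convexity each cell is met during one
interval of times, and two cells can become neighbours on the line only when one of them appears or
when a cell between them disappears. Hence at most `3n` pairs of cells share an edge. A vertex lying
in no disk besides the two that define it is on such an edge, and each edge carries at most two of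
them, so there are at most `6n` vertices of depth `2`. Keeping each disk independently with
probability `1/k` (Clarkson–Shor) extends this to depth at most `k`.
-/

open Module Submodule EuclideanGeometry
open scoped Finset RealInnerProductSpace

section ConsecutivePairs

variable {ι β τ : Type*} [LinearOrder β] [LinearOrder τ]

/-- `i` immediately precedes `j` among the elements of `A` when these are ordered by `key`. -/
structure IsConsecutive (key : ι → β) (A : Set ι) (i j : ι) : Prop where
  left_mem : i ∈ A
  right_mem : j ∈ A
  lt : key i < key j
  le_of_lt : ∀ k ∈ A, key i < key k → key j ≤ key k

namespace IsConsecutive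

variable {key : ι → β} {A : Set ι} {i i' j j' k : ι}

lemma left_unique (hkey : InjOn key A) (h : IsConsecutive key A i j)
    (h' : IsConsecutive key A i' j) : i = i' := by
  refine hkey h.left_mem h'.left_mem (le_antisymm ?_ ?_)
  · exact le_of_not_gt fun hlt => (h'.le_of_lt i h.left_mem hlt).not_gt h.lt
  · exact le_of_not_gt fun hlt => (h.le_of_lt i' h'.left_mem hlt).not_gt h'.lt

lemma right_unique (hkey : InjOn key A) (h : IsConsecutive key A i j)
    (h' : IsConsecutive key A i j') : j = j' :=
  hkey h.right_mem h'.right_mem <| le_antisymm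
    (h.le_of_lt j' h'.right_mem h'.lt) (h'.le_of_lt j h.right_mem h.lt)

lemma right_le_of_between (h : IsConsecutive key A i j) (h' : IsConsecutive key A i' j')
    (hi : key i < key k) (hj : key k < key j') : key j ≤ key j' :=
  h.le_of_lt j' h'.right_mem (hi.trans hj)

lemma eq_of_between (hkey : InjOn key A) (h : IsConsecutive key A i j)
    (h' : IsConsecutive key A i' j') (hi : key i < key k) (hj : key k < key j)
    (hi' : key i' < key k) (hj' : key k < key j') : i = i' ∧ j = j' := by
  obtain rfl : j = j' := hkey h.right_mem h'.right_mem <| le_antisymm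
    (h.right_le_of_between h' hi hj') (h'.right_le_of_between h hi' hj)
  exact ⟨h.left_unique hkey h', rfl⟩

end IsConsecutive

/-- `s` is the first of the times `T` at which `i` belongs to the time-dependent set `A`. -/
def IsBirth (T : Finset τ) (A : τ → Set ι) (i : ι) (s : τ) : Prop :=
  IsLeast {t | t ∈ T ∧ i ∈ A t} s

/-- `s` is the first of the times `T` at which `i` has left the time-dependent set `A`, after having
belonged to it at an earlier time of `T`. -/
def IsDeath (T : Finset τ) (A : τ → Set ι) (i : ι) (s : τ) : Prop :=
  IsLeast {t | t ∈ T ∧ i ∉ A t ∧ ∃ u ∈ T, u < t ∧ i ∈ A u} s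

variable {key : ι → β} {T : Finset τ} {A : τ → Set ι} {i j : ι} {s : τ}

lemma exists_mem_lt_of_not_isBirth (hs : s ∈ T) (hi : i ∈ A s) (h : ¬ IsBirth T A i s) :
    ∃ u ∈ T, u < s ∧ i ∈ A u := by
  by_contra! hno
  exact h ⟨⟨hs, hi⟩, fun u hu => le_of_not_gt fun hlt => hno u hu.1 hlt hu.2⟩

lemma IsConsecutive.isBirth_or_isDeath_of_isLeast (hA : ∀ i, {t | i ∈ A t}.OrdConnected)
    (hs : IsLeast {t | t ∈ T ∧ IsConsecutive key (A t) i j} s) :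
    IsBirth T A i s ∨ IsBirth T A j s ∨
      ∃ k, IsDeath T A k s ∧ key i < key k ∧ key k < key j := by
  obtain ⟨⟨hsT, hcons⟩, hleast⟩ := hs
  by_contra! hnone
  obtain ⟨hi, hj, hk⟩ := hnone
  obtain ⟨u, huT, hus, hiu⟩ := exists_mem_lt_of_not_isBirth hsT hcons.left_mem hi
  obtain ⟨w, hwT, hws, hjw⟩ := exists_mem_lt_of_not_isBirth hsT hcons.right_mem hj
  obtain ⟨v, hv, hvmax⟩ := (T.filter (· < s)).exists_max_image id ⟨u, by simp [huT, hus]⟩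
  simp only [Finset.mem_filter, id, and_imp] at hv hvmax
  obtain ⟨hvT, hvs⟩ := hv
  have hiv : i ∈ A v := (hA i).out hiu hcons.left_mem ⟨hvmax u huT hus, hvs.le⟩
  have hjv : j ∈ A v := (hA j).out hjw hcons.right_mem ⟨hvmax w hwT hws, hvs.le⟩
  have hnot : ¬ IsConsecutive key (A v) i j := fun h => (hleast ⟨hvT, h⟩).not_gt hvs
  obtain ⟨k, hkv, hik, hkj⟩ : ∃ k ∈ A v, key i < key k ∧ key k < key j := by
    by_contra! hno
    exact hnot ⟨hiv, hjv, hcons.lt, hno⟩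
  have hks : k ∉ A s := fun h => (hcons.le_of_lt k h hik).not_gt hkj
  refine (hk k ⟨⟨hsT, hks, v, hvT, hvs, hkv⟩, ?_⟩ hik).not_gt hkj
  rintro t ⟨htT, hkt, x, -, hxt, hkx⟩
  exact le_of_not_gt fun hts => hkt ((hA k).out hkx hkv ⟨hxt.le, hvmax t htT hts⟩)

variable {S : Finset ι} {E : Finset (ι × ι)}

lemma card_filter_left_isBirth_le (hAS : ∀ t, A t ⊆ S) (hkey : ∀ t, InjOn key (A t)) :
    #{e ∈ E | ∃ t, IsBirth T A e.1 t ∧ IsConsecutive key (A t) e.1 e.2} ≤ #S := by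
  refine Finset.card_le_card_of_injOn Prod.fst ?_ ?_
  · intro e he
    obtain ⟨-, t, -, hcons⟩ := Finset.mem_filter.1 he
    exact hAS t hcons.left_mem
  · rintro ⟨i, j⟩ he ⟨i', j'⟩ he' (rfl : i = i')
    obtain ⟨-, t, ht, hcons⟩ := Finset.mem_filter.1 he
    obtain ⟨-, t', ht', hcons'⟩ := Finset.mem_filter.1 he'
    obtain rfl := ht.unique ht'
    exact Prod.ext rfl (hcons.right_unique (hkey t) hcons')

lemma card_filter_right_isBirth_le (hAS : ∀ t, A t ⊆ S) (hkey : ∀ t, InjOn key (A t)) :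
    #{e ∈ E | ∃ t, IsBirth T A e.2 t ∧ IsConsecutive key (A t) e.1 e.2} ≤ #S := by
  refine Finset.card_le_card_of_injOn Prod.snd ?_ ?_
  · intro e he
    obtain ⟨-, t, -, hcons⟩ := Finset.mem_filter.1 he
    exact hAS t hcons.right_mem
  · rintro ⟨i, j⟩ he ⟨i', j'⟩ he' (rfl : j = j')
    obtain ⟨-, t, ht, hcons⟩ := Finset.mem_filter.1 he
    obtain ⟨-, t', ht', hcons'⟩ := Finset.mem_filter.1 he'
    obtain rfl := ht.unique ht'
    exact Prod.ext (hcons.left_unique (hkey t) hcons') rfl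

lemma card_filter_between_isDeath_le (hAS : ∀ t, A t ⊆ S) (hkey : ∀ t, InjOn key (A t)) :
    #{e ∈ E | ∃ t k, IsDeath T A k t ∧ IsConsecutive key (A t) e.1 e.2 ∧
      key e.1 < key k ∧ key k < key e.2} ≤ #S := by
  refine Finset.card_le_card_of_forall_subsingleton (fun e k => ∃ t, IsDeath T A k t ∧
    IsConsecutive key (A t) e.1 e.2 ∧ key e.1 < key k ∧ key k < key e.2) ?_ ?_
  · intro e he
    obtain ⟨-, t, k, hk, hbetween⟩ := Finset.mem_filter.1 he
    obtain ⟨-, -, u, -, -, hku⟩ := hk.1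
    exact ⟨k, hAS u hku, t, hk, hbetween⟩
  · rintro k - e ⟨-, t, ht, hcons, hlt, hgt⟩ e' ⟨-, t', ht', hcons', hlt', hgt'⟩
    obtain rfl := ht.unique ht'
    exact Prod.ext_iff.2 (hcons.eq_of_between (hkey t) hcons' hlt hgt hlt' hgt')

theorem card_le_three_mul_of_isConsecutive (hAS : ∀ t, A t ⊆ S)
    (hA : ∀ i, {t | i ∈ A t}.OrdConnected) (hkey : ∀ t, InjOn key (A t))
    (hE : ∀ e ∈ E, ∃ t ∈ T, IsConsecutive key (A t) e.1 e.2) : #E ≤ 3 * #S := by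
  have hcover : E ⊆ {e ∈ E | ∃ t, IsBirth T A e.1 t ∧ IsConsecutive key (A t) e.1 e.2} ∪
      {e ∈ E | ∃ t, IsBirth T A e.2 t ∧ IsConsecutive key (A t) e.1 e.2} ∪
      {e ∈ E | ∃ t k, IsDeath T A k t ∧ IsConsecutive key (A t) e.1 e.2 ∧
        key e.1 < key k ∧ key k < key e.2} := by
    intro e he
    obtain ⟨t, ht, hcons⟩ := hE e he
    obtain ⟨s, hs⟩ : ∃ s, IsLeast {t | t ∈ T ∧ IsConsecutive key (A t) e.1 e.2} s := by
      have hne : {t ∈ T | IsConsecutive key (A t) e.1 e.2}.Nonempty :=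
        ⟨t, Finset.mem_filter.2 ⟨ht, hcons⟩⟩
      exact ⟨_, by simpa only [Finset.coe_filter] using Finset.isLeast_min' _ hne⟩
    simp only [Finset.mem_union, Finset.mem_filter, he, true_and]
    rcases IsConsecutive.isBirth_or_isDeath_of_isLeast hA hs with h | h | ⟨k, h, hbetween⟩
    · exact .inl (.inl ⟨s, h, hs.1.2⟩)
    · exact .inl (.inr ⟨s, h, hs.1.2⟩)
    · exact .inr ⟨s, k, h, hs.1.2, hbetween⟩
  calc #E ≤ _ := Finset.card_le_card hcover
    _ ≤ _ := (Finset.card_union_le _ _).trans (Nat.add_le_add_right (Finset.card_union_le _ _) _)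
    _ ≤ #S + #S + #S := by
      gcongr
      · exact card_filter_left_isBirth_le hAS hkey
      · exact card_filter_right_isBirth_le hAS hkey
      · exact card_filter_between_isDeath_le hAS hkey
    _ = 3 * #S := by ring

end ConsecutivePairs

section PowerDiagram

section Metric

variable {P : Type*} [MetricSpace P]

/-- The cell of `s` in the power diagram of `S`: the points whose power with respect to `s` is at
most their power with respect to any sphere of `S`. -/
def powerCell (S : Finset (Sphere P)) (s : Sphere P) : Set P :=
  {p | ∀ s' ∈ S, s.power p ≤ s'.power p}

/-- `p` is a relative interior point of the common face of the power cells of `s` and `s'`. -/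
structure IsPowerEdgePoint (S : Finset (Sphere P)) (s s' : Sphere P) (p : P) : Prop where
  left_mem : s ∈ S
  right_mem : s' ∈ S
  power_eq : s.power p = s'.power p
  power_lt : ∀ u ∈ S, u ≠ s → u ≠ s' → s.power p < u.power p

namespace IsPowerEdgePoint

variable {S : Finset (Sphere P)} {s s' : Sphere P} {p : P}

protected lemma symm (h : IsPowerEdgePoint S s s' p) : IsPowerEdgePoint S s' s p :=
  ⟨h.right_mem, h.left_mem, h.power_eq.symm, fun u hu hus' hus =>
    h.power_eq ▸ h.power_lt u hu hus hus'⟩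

lemma mem_powerCell_left (h : IsPowerEdgePoint S s s' p) : p ∈ powerCell S s := by
  intro u hu
  rcases eq_or_ne u s with rfl | hus
  · rfl
  rcases eq_or_ne u s' with rfl | hus'
  · exact h.power_eq.le
  · exact (h.power_lt u hu hus hus').le

end IsPowerEdgePoint

end Metric

variable {E : Type*} [NormedAddCommGroup E] [InnerProductSpace ℝ E]

lemma power_add_smul_sub_power_add_smul (s s' : Sphere E) (p v : E) (t : ℝ) :
    s.power (p + t • v) - s'.power (p + t • v) =
      s.power p - s'.power p - 2 * t * (⟪s.center, v⟫ - ⟪s'.center, v⟫) := by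
  have expand (c : E) :
      dist (p + t • v) c ^ 2 = dist p c ^ 2 + 2 * t * (⟪p, v⟫ - ⟪c, v⟫) + ‖t • v‖ ^ 2 := by
    rw [dist_eq_norm, dist_eq_norm, add_sub_right_comm, norm_add_sq_real, inner_smul_right,
      inner_sub_left]
    ring
  simp only [Sphere.power, expand]
  ring

lemma convex_setOf_power_le_power (s s' : Sphere E) : Convex ℝ {p | s.power p ≤ s'.power p} := by
  have halfSpace : {p | s.power p ≤ s'.power p} =
      {p | innerₗ E (s'.center - s.center) p ≤ (s'.power 0 - s.power 0) / 2} := by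
    ext p
    have hdiff := power_add_smul_sub_power_add_smul s s' 0 p 1
    rw [zero_add, one_smul] at hdiff
    simp only [mem_ofPred_eq, innerₗ_apply_apply, inner_sub_left]
    constructor <;> intro h <;> linarith
  rw [halfSpace]
  exact convex_halfSpace_le (LinearMap.isLinear _) _

lemma convex_powerCell (S : Finset (Sphere E)) (s : Sphere E) : Convex ℝ (powerCell S s) := by
  simp only [powerCell, ofPred_forall]
  exact convex_iInter₂ fun u _ => convex_setOf_power_le_power s u

/-- The spheres of `S` whose power cell meets the hyperplane `ℓ = x`. -/
def sweepFront (S : Finset (Sphere E)) (ℓ : E →ₗ[ℝ] ℝ) (x : ℝ) : Set (Sphere E) :=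
  {s | s ∈ S ∧ ∃ p ∈ powerCell S s, ℓ p = x}

variable {S : Finset (Sphere E)} {ℓ : E →ₗ[ℝ] ℝ} {v : E}

lemma sweepFront_subset (x : ℝ) : sweepFront S ℓ x ⊆ S := fun _ hs => hs.1

lemma ordConnected_setOf_mem_sweepFront (s : Sphere E) :
    {x | s ∈ sweepFront S ℓ x}.OrdConnected := by
  have himage : (ℓ '' powerCell S s).OrdConnected :=
    ((convex_powerCell S s).linear_image ℓ).ordConnected
  exact ⟨fun x hx y hy z hz => ⟨hx.1, himage.out hx.2 hy.2 hz⟩⟩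

lemma injOn_inner_center_sweepFront (hr : ∀ s ∈ S, 0 ≤ s.radius)
    (hv : InjOn (fun c => ⟪c, v⟫) (Sphere.center '' (S : Set (Sphere E)))) (x : ℝ) :
    InjOn (fun s => ⟪s.center, v⟫) (sweepFront S ℓ x) := by
  rintro s ⟨hs, p, hp, -⟩ s' ⟨hs', p', hp', -⟩ hkey
  have hcenter : s.center = s'.center := hv (mem_image_of_mem _ hs) (mem_image_of_mem _ hs') hkey
  have hle := hp s' hs'
  have hge := hp' s hs
  simp only [Sphere.power, hcenter] at hle hge
  exact Sphere.ext hcenter <|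
    (pow_left_inj₀ (hr s hs) (hr s' hs') two_ne_zero).1 (by linarith)

namespace IsPowerEdgePoint

lemma isConsecutive_sweepFront {s s' : Sphere E} {p : E} (hℓ : LinearMap.ker ℓ ≤ span ℝ {v})
    (h : IsPowerEdgePoint S s s' p) (hlt : ⟪s.center, v⟫ < ⟪s'.center, v⟫) :
    IsConsecutive (fun s => ⟪s.center, v⟫) (sweepFront S ℓ (ℓ p)) s s' := by
  refine ⟨⟨h.left_mem, p, h.mem_powerCell_left, rfl⟩,
    ⟨h.right_mem, p, h.symm.mem_powerCell_left, rfl⟩, hlt, ?_⟩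
  rintro u ⟨hu, q, hq, hqp⟩ hsu
  by_contra! hus'
  obtain ⟨t, ht⟩ : ∃ t : ℝ, t • v = q - p :=
    mem_span_singleton.1 (hℓ (by rw [LinearMap.mem_ker, map_sub, hqp, sub_self]))
  obtain rfl : q = p + t • v := by rw [ht, add_sub_cancel]
  have hpu : s.power p < u.power p :=
    h.power_lt u hu (fun h => hsu.ne (by rw [h])) (fun h => hus'.ne (by rw [h]))
  have hq_left := hq s h.left_mem
  have hq_right := hq s' h.right_mem
  have hdiff_left := power_add_smul_sub_power_add_smul u s p v t
  have hdiff_right := power_add_smul_sub_power_add_smul u s' p v t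
  have hpower := h.power_eq
  rcases le_total t 0 with ht | ht
  · have := mul_nonneg_of_nonpos_of_nonpos ht (sub_nonpos.2 hsu.le)
    linarith
  · have := mul_nonneg ht (sub_nonneg.2 hus'.le)
    linarith

end IsPowerEdgePoint

theorem card_powerEdges_le (hr : ∀ s ∈ S, 0 ≤ s.radius)
    (hv : InjOn (fun c => ⟪c, v⟫) (Sphere.center '' (S : Set (Sphere E))))
    (hℓ : LinearMap.ker ℓ ≤ span ℝ {v}) {F : Finset (Sphere E × Sphere E)}
    (hF : ∀ e ∈ F, ⟪e.1.center, v⟫ < ⟪e.2.center, v⟫ ∧ ∃ p, IsPowerEdgePoint S e.1 e.2 p) :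
    #F ≤ 3 * #S := by
  choose! hlt p hp using hF
  refine card_le_three_mul_of_isConsecutive (T := F.image (ℓ ∘ p)) (A := sweepFront S ℓ)
    sweepFront_subset ordConnected_setOf_mem_sweepFront (injOn_inner_center_sweepFront hr hv)
    fun e he => ⟨ℓ (p e), Finset.mem_image_of_mem _ he, ?_⟩
  exact (hp e he).isConsecutive_sweepFront hℓ (hlt e he)

end PowerDiagram

section SweepDirection

variable {E : Type*} [NormedAddCommGroup E] [InnerProductSpace ℝ E]

lemma exists_injOn_inner (F : Finset E) : ∃ v : E, InjOn (fun x => ⟪x, v⟫) (F : Set E) := by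
  obtain ⟨v, hv⟩ := Dual.exists_forall_ne_zero_of_forall_exists
    (fun e : F.offDiag => innerₗ E (e.1.1 - e.1.2))
    (fun e => ⟨e.1.1 - e.1.2, inner_self_ne_zero.2
      (sub_ne_zero.2 (Finset.mem_offDiag.1 e.2).2.2)⟩)
  refine ⟨v, fun x hx y hy hxy => by_contra fun hne => ?_⟩
  apply hv ⟨(x, y), Finset.mem_offDiag.2 ⟨hx, hy, hne⟩⟩
  simpa [inner_sub_left, sub_eq_zero] using hxy

variable [Fact (finrank ℝ E = 2)]

attribute [local instance] FiniteDimensional.of_fact_finrank_eq_two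

lemma exists_ker_eq_span_singleton {v : E} (hv : v ≠ 0) :
    ∃ ℓ : E →ₗ[ℝ] ℝ, LinearMap.ker ℓ = span ℝ {v} := by
  have hquot : finrank ℝ (E ⧸ span ℝ {v}) = finrank ℝ ℝ := by
    have := finrank_quotient_add_finrank (span ℝ {v})
    rw [finrank_span_singleton hv, Fact.out (p := finrank ℝ E = 2)] at this
    rw [finrank_self]
    omega
  refine ⟨(LinearEquiv.ofFinrankEq _ _ hquot).toLinearMap ∘ₗ mkQ _, ?_⟩
  rw [LinearEquiv.ker_comp, ker_mkQ]

lemma exists_sweep_direction (F : Finset E) : ∃ (v : E) (ℓ : E →ₗ[ℝ] ℝ),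
    InjOn (fun x => ⟪x, v⟫) (F : Set E) ∧ LinearMap.ker ℓ = span ℝ {v} := by
  have : Nontrivial E :=
    nontrivial_of_finrank_pos (R := ℝ) (by simp [Fact.out (p := finrank ℝ E = 2)])
  obtain ⟨x, hx⟩ := exists_ne (0 : E)
  obtain ⟨v, hv⟩ := exists_injOn_inner (insert x (insert 0 F))
  have hv0 : v ≠ 0 := by
    rintro rfl
    exact hx (hv (by simp) (by simp) (by simp))
  obtain ⟨ℓ, hℓ⟩ := exists_ker_eq_span_singleton hv0
  exact ⟨v, ℓ, hv.mono (mod_cast fun y hy => by simp [hy]), hℓ⟩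

end SweepDirection

section ClarksonShor

variable {α β : Type*}

/-- The probability that a random subset of `D`, containing each element independently with
probability `q`, is equal to `R`. -/
def samplingWeight (D : Finset α) (q : ℝ) (R : Finset α) : ℝ :=
  q ^ #R * (1 - q) ^ #(D \ R)

lemma samplingWeight_nonneg {q : ℝ} (hq₀ : 0 ≤ q) (hq₁ : q ≤ 1) (D R : Finset α) :
    0 ≤ samplingWeight D q R :=
  mul_nonneg (pow_nonneg hq₀ _) (pow_nonneg (sub_nonneg.2 hq₁) _)

lemma sum_samplingWeight_Icc {D X Z : Finset α} (hXZ : X ⊆ Z) (hZD : Z ⊆ D) (q : ℝ) :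
    ∑ R ∈ Finset.Icc X Z, samplingWeight D q R = q ^ #X * (1 - q) ^ #(D \ Z) := by
  have hdisj {U : Finset α} (hU : U ∈ (Z \ X).powerset) : Disjoint X U :=
    Finset.disjoint_sdiff.mono_right (Finset.mem_powerset.1 hU)
  have hweight (U : Finset α) (hU : U ∈ (Z \ X).powerset) : samplingWeight D q (X ∪ U) =
      q ^ #X * (1 - q) ^ #(D \ Z) * (q ^ #U * (1 - q) ^ (#(Z \ X) - #U)) := by
    have hUZ := Finset.mem_powerset.1 hU
    have hXU : X ∪ U ⊆ Z := Finset.union_subset hXZ (hUZ.trans Finset.sdiff_subset)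
    have hcompl : #(D \ (X ∪ U)) = #(D \ Z) + (#(Z \ X) - #U) := by
      have hcardXU := Finset.card_le_card hXU
      have hcardZ := Finset.card_le_card hZD
      rw [Finset.card_union_of_disjoint (hdisj hU)] at hcardXU
      rw [Finset.card_sdiff_of_subset (hXU.trans hZD), Finset.card_sdiff_of_subset hZD,
        Finset.card_sdiff_of_subset hXZ, Finset.card_union_of_disjoint (hdisj hU)]
      omega
    rw [samplingWeight, hcompl, Finset.card_union_of_disjoint (hdisj hU)]
    ring
  have hinj : InjOn (X ∪ ·) ((Z \ X).powerset : Set (Finset α)) := fun U hU U' hU' h => by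
    rw [← Finset.union_sdiff_cancel_left (hdisj hU), ← Finset.union_sdiff_cancel_left (hdisj hU')]
    exact congrArg (· \ X) h
  rw [Finset.Icc_eq_image_powerset hXZ, Finset.sum_image hinj, Finset.sum_congr rfl hweight,
    ← Finset.mul_sum, Finset.sum_pow_mul_eq_add_pow, add_sub_cancel, one_pow, mul_one]

lemma sum_card_mul_samplingWeight (D : Finset α) (q : ℝ) :
    ∑ R ∈ D.powerset, #R * samplingWeight D q R = #D * q := by
  calc ∑ R ∈ D.powerset, #R * samplingWeight D q R
      = ∑ R ∈ D.powerset, ∑ _d ∈ R, samplingWeight D q R := by simp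
    _ = ∑ d ∈ D, ∑ R ∈ Finset.Icc {d} D, samplingWeight D q R :=
      Finset.sum_comm' fun R d => by
        simp only [Finset.mem_powerset, Finset.mem_Icc,
          Finset.singleton_subset_iff]
        exact ⟨fun h => ⟨⟨h.2, h.1⟩, h.1 h.2⟩, fun h => ⟨h.1.2, h.1.1⟩⟩
    _ = ∑ _d ∈ D, q := Finset.sum_congr rfl fun d hd => by
      rw [sum_samplingWeight_Icc (Finset.singleton_subset_iff.2 hd) subset_rfl]
      simp
    _ = #D * q := by simp

lemma one_third_le_one_sub_inv_pow (m : ℕ) : (1 : ℝ) / 3 ≤ (1 - ((m : ℝ) + 1)⁻¹) ^ m := by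
  rcases m.eq_zero_or_pos with rfl | hm
  · norm_num
  have hinv : 1 - ((m : ℝ) + 1)⁻¹ = (1 + (m : ℝ)⁻¹)⁻¹ := by
    field_simp
    ring
  rw [hinv, inv_pow, one_div]
  exact inv_anti₀ (by positivity) (Real.one_add_inv_pow_le_exp.trans Real.exp_one_lt_three.le)

variable {D : Finset α} {V : Finset β} {X Y : β → Finset α} {c d m : ℕ}

lemma sum_sum_samplingWeight_Icc_le
    (hc : ∀ R ⊆ D, #{p ∈ V | X p ⊆ R ∧ Disjoint (Y p) R} ≤ c * #R)
    {q : ℝ} (hq₀ : 0 ≤ q) (hq₁ : q ≤ 1) :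
    ∑ p ∈ V, ∑ R ∈ Finset.Icc (X p) (D \ Y p), samplingWeight D q R ≤ c * (#D * q) := by
  calc ∑ p ∈ V, ∑ R ∈ Finset.Icc (X p) (D \ Y p), samplingWeight D q R
      = ∑ R ∈ D.powerset, ∑ p ∈ V with X p ⊆ R ∧ Disjoint (Y p) R, samplingWeight D q R :=
      Finset.sum_comm' fun p R => by
        simp only [Finset.mem_Icc, Finset.subset_sdiff, Finset.mem_filter,
          Finset.mem_powerset, disjoint_comm]
        tauto
    _ = ∑ R ∈ D.powerset, #{p ∈ V | X p ⊆ R ∧ Disjoint (Y p) R} * samplingWeight D q R := by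
      simp only [Finset.sum_const, nsmul_eq_mul]
    _ ≤ ∑ R ∈ D.powerset, c * (#R * samplingWeight D q R) :=
      Finset.sum_le_sum fun R hR => by
        rw [← mul_assoc]
        exact mul_le_mul_of_nonneg_right (mod_cast hc R (Finset.mem_powerset.1 hR))
          (samplingWeight_nonneg hq₀ hq₁ D R)
    _ = c * (#D * q) := by rw [← Finset.mul_sum, sum_card_mul_samplingWeight]

/-- Clarkson–Shor: `X p` is the defining set of `p` and `Y p` its conflict list. -/
theorem card_le_of_forall_card_conflictFree_le (hX : ∀ p ∈ V, X p ⊆ D) (hY : ∀ p ∈ V, Y p ⊆ D)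
    (hXY : ∀ p ∈ V, Disjoint (X p) (Y p)) (hXcard : ∀ p ∈ V, #(X p) = d + 1)
    (hYcard : ∀ p ∈ V, #(Y p) ≤ m)
    (hc : ∀ R ⊆ D, #{p ∈ V | X p ⊆ R ∧ Disjoint (Y p) R} ≤ c * #R) :
    #V ≤ 3 * c * #D * (m + 1) ^ d := by
  set q : ℝ := ((m : ℝ) + 1)⁻¹ with hq
  have hq₀ : 0 < q := by positivity
  have hq₁ : q ≤ 1 := inv_le_one_of_one_le₀ (by simp)
  have hprob (p : β) (hp : p ∈ V) : q ^ (d + 1) * (1 / 3) ≤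
      ∑ R ∈ Finset.Icc (X p) (D \ Y p), samplingWeight D q R := by
    rw [sum_samplingWeight_Icc (Finset.subset_sdiff.2 ⟨hX p hp, hXY p hp⟩) Finset.sdiff_subset,
      hXcard p hp, Finset.sdiff_sdiff_eq_self (hY p hp)]
    gcongr
    exact (one_third_le_one_sub_inv_pow m).trans
      (pow_le_pow_of_le_one (sub_nonneg.2 hq₁) (sub_le_self _ hq₀.le) (hYcard p hp))
  have hexpect : (#V : ℝ) * (q ^ (d + 1) * (1 / 3)) ≤ c * (#D * q) := by
    rw [← nsmul_eq_mul]
    exact (Finset.card_nsmul_le_sum _ _ _ hprob).trans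
      (sum_sum_samplingWeight_Icc_le hc hq₀.le hq₁)
  have hcancel : (#V : ℝ) ≤ 3 * c * #D * ((m : ℝ) + 1) ^ d := by
    rw [hq, inv_pow, pow_succ] at hexpect
    field_simp at hexpect
    linarith
  exact_mod_cast hcancel

end ClarksonShor

section ShallowVertices

section Metric

variable {P : Type*} [MetricSpace P]

/-- The number of spheres of `S` that have `p` inside or on them, which is expressed by the power
of `p` being nonpositive. -/
def sphereDepth (S : Finset (Sphere P)) (p : P) : ℕ :=
  #{s ∈ S | s.power p ≤ 0}

/-- The points common to two distinct spheres of `S` whose depth is at most `k`. -/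
def shallowVertices (S : Finset (Sphere P)) (k : ℕ) : Set P :=
  {p | ∃ s ∈ S, ∃ s' ∈ S, s ≠ s' ∧ p ∈ s ∧ p ∈ s' ∧ sphereDepth S p ≤ k}

variable {R S : Finset (Sphere P)} {s s' : Sphere P} {p : P}

lemma power_eq_zero_of_mem (h : p ∈ s) : s.power p = 0 :=
  (Sphere.power_eq_zero_iff_mem_sphere (Sphere.radius_nonneg_of_mem h)).2 h

lemma pair_subset_filter_power_nonpos (hs : s ∈ S) (hs' : s' ∈ S) (hp : p ∈ s) (hp' : p ∈ s') :
    {s, s'} ⊆ S.filter (·.power p ≤ 0) := by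
  simp [Finset.insert_subset_iff, hs, hs', power_eq_zero_of_mem hp, power_eq_zero_of_mem hp']

lemma two_le_sphereDepth (hs : s ∈ S) (hs' : s' ∈ S) (hne : s ≠ s') (hp : p ∈ s) (hp' : p ∈ s') :
    2 ≤ sphereDepth S p :=
  (Finset.card_pair hne).ge.trans
    (Finset.card_le_card (pair_subset_filter_power_nonpos hs hs' hp hp'))

lemma shallowVertices_zero (S : Finset (Sphere P)) : shallowVertices S 0 = ∅ := by
  refine eq_empty_of_forall_notMem ?_
  rintro p ⟨s, hs, s', hs', hne, hp, hp', hdepth⟩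
  have := two_le_sphereDepth hs hs' hne hp hp'
  omega

lemma isPowerEdgePoint_of_sphereDepth_le_two (hs : s ∈ S) (hs' : s' ∈ S) (hne : s ≠ s')
    (hp : p ∈ s) (hp' : p ∈ s') (hdepth : sphereDepth S p ≤ 2) : IsPowerEdgePoint S s s' p := by
  have hpair : {s, s'} = S.filter (·.power p ≤ 0) :=
    Finset.eq_of_subset_of_card_le (pair_subset_filter_power_nonpos hs hs' hp hp')
      (by rwa [Finset.card_pair hne])
  refine ⟨hs, hs', by rw [power_eq_zero_of_mem hp, power_eq_zero_of_mem hp'], ?_⟩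
  intro u hu hus hus'
  rw [power_eq_zero_of_mem hp]
  by_contra! hpower
  have : u ∈ ({s, s'} : Finset (Sphere P)) := hpair ▸ Finset.mem_filter.2 ⟨hu, hpower⟩
  simp [hus, hus'] at this

lemma mem_shallowVertices_two_of_disjoint (hRS : R ⊆ S) (hs : s ∈ R) (hs' : s' ∈ R) (hne : s ≠ s')
    (hp : p ∈ s) (hp' : p ∈ s') (hR : Disjoint (S.filter (·.power p ≤ 0) \ {s, s'}) R) :
    p ∈ shallowVertices R 2 := by
  have hsub : R.filter (·.power p ≤ 0) ⊆ {s, s'} := by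
    intro u hu
    obtain ⟨huR, hpower⟩ := Finset.mem_filter.1 hu
    by_contra hpair
    exact Finset.disjoint_left.1 hR
      (Finset.mem_sdiff.2 ⟨Finset.mem_filter.2 ⟨hRS huR, hpower⟩, hpair⟩) huR
  exact ⟨s, hs, s', hs', hne, hp, hp', (Finset.card_le_card hsub).trans Finset.card_le_two⟩

end Metric

variable {E : Type*} [NormedAddCommGroup E] [InnerProductSpace ℝ E] [Fact (finrank ℝ E = 2)]
  {S : Finset (Sphere E)}

attribute [local instance] FiniteDimensional.of_fact_finrank_eq_two

lemma encard_inter_sphere_le_two {s s' : Sphere E} (hne : s ≠ s') :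
    {p | p ∈ s ∧ p ∈ s'}.encard ≤ 2 := by
  rcases Set.subsingleton_or_nontrivial {p | p ∈ s ∧ p ∈ s'} with h | ⟨p₁, h₁, p₂, h₂, h₁₂⟩
  · exact (encard_le_one_iff_subsingleton.2 h).trans one_le_two
  · refine (encard_le_encard fun p hp => ?_).trans (encard_pair h₁₂).le
    exact eq_of_mem_sphere_of_mem_sphere_of_finrank_eq_two Fact.out hne h₁₂
      h₁.1 h₂.1 hp.1 h₁.2 h₂.2 hp.2

lemma finite_shallowVertices (S : Finset (Sphere E)) (k : ℕ) : (shallowVertices S k).Finite := by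
  have hcover : shallowVertices S k ⊆ ⋃ e ∈ S.offDiag, {p | p ∈ e.1 ∧ p ∈ e.2} := by
    rintro p ⟨s, hs, s', hs', hne, hp, hp', -⟩
    exact mem_iUnion₂.2 ⟨(s, s'), Finset.mem_offDiag.2 ⟨hs, hs', hne⟩, hp, hp'⟩
  refine (Finite.biUnion S.offDiag.finite_toSet fun e he => ?_).subset hcover
  exact finite_of_encard_le_coe (k := 2)
    (encard_inter_sphere_le_two (Finset.mem_offDiag.1 he).2.2)

theorem ncard_shallowVertices_two_le (hr : ∀ s ∈ S, 0 ≤ s.radius) :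
    (shallowVertices S 2).ncard ≤ 6 * #S := by
  obtain ⟨v, ℓ, hv, hℓ⟩ := exists_sweep_direction (S.image Sphere.center)
  rw [Finset.coe_image] at hv
  set F := {e ∈ S ×ˢ S | ⟪e.1.center, v⟫ < ⟪e.2.center, v⟫ ∧ ∃ p, IsPowerEdgePoint S e.1 e.2 p}
    with hF
  have hcover : shallowVertices S 2 ⊆ ⋃ e ∈ F, {p | p ∈ e.1 ∧ p ∈ e.2} := by
    rintro p ⟨s, hs, s', hs', hne, hp, hp', hdepth⟩
    have hkey : ⟪s.center, v⟫ ≠ ⟪s'.center, v⟫ := fun h =>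
      (Sphere.center_ne_iff_ne_of_mem hp hp').2 hne
        (hv (mem_image_of_mem _ hs) (mem_image_of_mem _ hs') h)
    have hedge := isPowerEdgePoint_of_sphereDepth_le_two hs hs' hne hp hp' hdepth
    simp only [mem_iUnion₂, hF, Finset.mem_filter, Finset.mem_product]
    rcases lt_or_gt_of_ne hkey with hlt | hgt
    · exact ⟨(s, s'), ⟨⟨hs, hs'⟩, hlt, p, hedge⟩, hp, hp'⟩
    · exact ⟨(s', s), ⟨⟨hs', hs⟩, hgt, p, hedge.symm⟩, hp', hp⟩
  have hpair (e) (he : e ∈ F) : {p | p ∈ e.1 ∧ p ∈ e.2}.encard ≤ 2 :=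
    encard_inter_sphere_le_two fun h => (Finset.mem_filter.1 he).2.1.ne (by rw [h])
  have hFcard : #F ≤ 3 * #S := card_powerEdges_le hr hv hℓ.le fun e he => (Finset.mem_filter.1 he).2
  have hencard : (shallowVertices S 2).encard ≤ (6 * #S : ℕ) :=
    calc (shallowVertices S 2).encard
      _ ≤ _ := encard_le_encard hcover
      _ ≤ _ := F.set_encard_biUnion_le _
      _ ≤ #F • 2 := Finset.sum_le_card_nsmul _ _ _ hpair
      _ = (#F * 2 : ℕ) := by simp
      _ ≤ (6 * #S : ℕ) := by norm_cast; omega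
  exact (encard_le_coe_iff_finite_ncard_le.1 hencard).2

theorem ncard_shallowVertices_le (hr : ∀ s ∈ S, 0 ≤ s.radius) (k : ℕ) :
    (shallowVertices S k).ncard ≤ 18 * #S * k := by
  obtain _ | m := k
  · simp [shallowVertices_zero]
  have hfin := finite_shallowVertices S (m + 1)
  choose! s hs s' hs' hne hp hp' hdepth using fun p (hpV : p ∈ shallowVertices S (m + 1)) => hpV
  have hsub (p) (hpV : p ∈ shallowVertices S (m + 1)) :
      {s p, s' p} ⊆ S.filter (·.power p ≤ 0) :=
    pair_subset_filter_power_nonpos (hs p hpV) (hs' p hpV) (hp p hpV) (hp' p hpV)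
  have hconflictFree (R : Finset (Sphere E)) (hR : R ⊆ S) :
      #{p ∈ hfin.toFinset | {s p, s' p} ⊆ R ∧
        Disjoint (S.filter (·.power p ≤ 0) \ {s p, s' p}) R} ≤ 6 * #R := by
    rw [← ncard_coe_finset]
    refine (ncard_le_ncard ?_ (finite_shallowVertices R 2)).trans
      (ncard_shallowVertices_two_le fun s hs => hr s (hR hs))
    intro p hpR
    obtain ⟨hpV, hpair, hdisj⟩ := Finset.mem_filter.1 hpR
    rw [Finite.mem_toFinset] at hpV
    rw [Finset.insert_subset_iff, Finset.singleton_subset_iff] at hpair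
    exact mem_shallowVertices_two_of_disjoint hR hpair.1 hpair.2 (hne p hpV) (hp p hpV)
      (hp' p hpV) hdisj
  rw [ncard_eq_toFinset_card _ hfin]
  simp only [← Finite.mem_toFinset hfin] at hsub hne hdepth
  have hbound := card_le_of_forall_card_conflictFree_le (d := 1) (m := m)
    (fun p hpV => (hsub p hpV).trans (Finset.filter_subset _ _))
    (fun _ _ => Finset.sdiff_subset.trans (Finset.filter_subset _ _))
    (fun _ _ => Finset.disjoint_sdiff) (fun p hpV => Finset.card_pair (hne p hpV))
    (fun p hpV => ?_) hconflictFree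
  · simpa [mul_assoc] using hbound
  · have hsplit := Finset.card_sdiff_add_card_eq_card (hsub p hpV)
    have hle : #(S.filter (·.power p ≤ 0)) ≤ m + 1 := hdepth p hpV
    rw [Finset.card_pair (hne p hpV)] at hsplit
    omega

theorem shallow_vertices_count_general {D : Finset (Set E)}
    (hD : ∀ d ∈ D, ∃ c r, 0 ≤ r ∧ d = closedBall c r) (k : ℕ) :
    {p | ∃ d₁ ∈ D, ∃ d₂ ∈ D, d₁ ≠ d₂ ∧ p ∈ frontier d₁ ∧ p ∈ frontier d₂ ∧
      {d | d ∈ D ∧ p ∈ d}.ncard ≤ k}.encard ≤ (18 * #D * k : ℕ) := by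
  have hsphere : ∀ d ∈ D, ∃ s : Sphere E, 0 ≤ s.radius ∧ d = closedBall s.center s.radius :=
    fun d hd => let ⟨c, r, hr, hball⟩ := hD d hd; ⟨⟨c, r⟩, hr, hball⟩
  choose! σ hr hball using hsphere
  have hinj : InjOn σ D := fun d hd d' hd' h => by rw [hball d hd, hball d' hd', h]
  have hmem (d) (hd : d ∈ D) (p) (hp : p ∈ frontier d) : p ∈ σ d := by
    rw [hball d hd] at hp
    exact frontier_closedBall_subset_sphere hp
  have hdepth (p) : sphereDepth (D.image σ) p ≤ {d | d ∈ D ∧ p ∈ d}.ncard := by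
    have hpower (d) (hd : d ∈ D) : (σ d).power p ≤ 0 ↔ p ∈ d := by
      conv_rhs => rw [hball d hd, mem_closedBall]
      exact Sphere.power_nonpos_iff_dist_center_le_radius (hr d hd)
    rw [sphereDepth, Finset.filter_image, Finset.filter_congr hpower, ← Finset.coe_filter,
      ncard_coe_finset]
    exact Finset.card_image_le
  have hsub : {p | ∃ d₁ ∈ D, ∃ d₂ ∈ D, d₁ ≠ d₂ ∧ p ∈ frontier d₁ ∧ p ∈ frontier d₂ ∧
      {d | d ∈ D ∧ p ∈ d}.ncard ≤ k} ⊆ shallowVertices (D.image σ) k := by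
    rintro p ⟨d₁, hd₁, d₂, hd₂, hne, hp₁, hp₂, hk⟩
    exact ⟨σ d₁, Finset.mem_image_of_mem σ hd₁, σ d₂, Finset.mem_image_of_mem σ hd₂,
      hinj.ne hd₁ hd₂ hne, hmem d₁ hd₁ p hp₁, hmem d₂ hd₂ p hp₂, (hdepth p).trans hk⟩
  refine (encard_le_encard hsub).trans
    (encard_le_coe_iff_finite_ncard_le.2 ⟨finite_shallowVertices _ k, ?_⟩)
  refine (ncard_shallowVertices_le ?_ k).trans (by gcongr; exact Finset.card_image_le)
  exact Finset.forall_mem_image.2 hr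

end ShallowVertices

/-- There is a universal constant `C > 0` such that for every
finite set `D` of `n` disks in general position and every integer `k ≥ 1`, the
number of points lying on the boundary circles of two distinct disks of `D`
and having depth at most `k` is at most `C·n·k`. -/
theorem shallow_vertices_count :
    ∃ C : ℝ, 0 < C ∧
      ∀ (D : Finset (Set Plane)), (∀ d ∈ D, IsDisk d) → GeneralPosition D →
      ∀ k : ℕ, 1 ≤ k →
      (({p : Plane | ∃ d₁ ∈ D, ∃ d₂ ∈ D, d₁ ≠ d₂ ∧
          p ∈ frontier d₁ ∧ p ∈ frontier d₂ ∧ diskDepth D p ≤ k}).ncard : ℝ)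
        ≤ C * D.card * k := by
  have : Fact (finrank ℝ Plane = 2) := ⟨finrank_euclideanSpace_fin⟩
  refine ⟨18, by norm_num, fun D hD _ k _ => ?_⟩
  have hcount := shallow_vertices_count_general
    (fun d hd => (hD d hd).imp fun _ ⟨r, hr, h⟩ => ⟨r, hr.le, h⟩) k
  exact_mod_cast (encard_le_coe_iff_finite_ncard_le.1 hcount).2
end
end

section
/- There is a universal constant C > 0 such that the following holds. Let D₁ and D₂ be two disjoint finite sets of distinct disks in the plane with |D₁| + |D₂| = n, and let k ≥ 1 be an integer. Then the number of pairs (d₁, d₂) with d₁ ∈ D₁, d₂ ∈ D₂ for which there exists a point p ∈ d₁ ∩ d₂ with depth_{D₁ ∪ D₂}(p) ≤ k is at most C·n·k. -/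
open Metric Set
open scoped Classical

noncomputable section

/-!
Lift a disk with center `c` and radius `r` to the affine function
`f p = 2 ⟪c, p⟫ + r ^ 2 - ‖c‖ ^ 2`, so that `p` lies in the disk iff `‖p‖ ^ 2 ≤ f p`. If `p`
witnesses that a pair of disks is shallow, then the two lifts become the two largest functions at
`p` once at most `k` others are deleted, and a Clarkson–Shor random sample with density
`1 / (2 * k)` does so with probability of order `1 / k ^ 2`. It therefore suffices that, among `n`
affine functions on the plane, only `O(n)` pairs are somewhere the two largest.

Such a pair either shares a wall of the upper envelope, or one of the two is nowhere maximal but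
becomes so when the other is deleted. In the second case Helly's theorem leaves at most three
candidates for the other one. In the first case sweep a vertical line: on it the functions appear
in the upper envelope in the order of their slopes, and each is present during an interval of time,
since the region where it is maximal is convex. Two functions become consecutive only when one of
them enters or when one between them leaves, which happens at most `3 * n` times. Distinct slopes
are obtained by a perturbation, to which being the two largest at a point is robust.
-/

open scoped Finset Topology

section ClarksonShor

variable {ι α : Type*}

/-- The probability that a random subset of `D`, containing each element independently with
probability `p`, equals `S`. Meaningful for `S ⊆ D` only. -/
def bernoulliWeight (p : ℝ) (D S : Finset ι) : ℝ :=
  p ^ #S * (1 - p) ^ (#D - #S)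

lemma bernoulliWeight_nonneg {p : ℝ} (hp₀ : 0 ≤ p) (hp₁ : p ≤ 1) (D S : Finset ι) :
    0 ≤ bernoulliWeight p D S :=
  mul_nonneg (pow_nonneg hp₀ _) (pow_nonneg (sub_nonneg.2 hp₁) _)

lemma sum_Icc_bernoulliWeight (p : ℝ) {A B D : Finset ι} (hAB : A ⊆ B) (hBD : B ⊆ D) :
    ∑ S ∈ Finset.Icc A B, bernoulliWeight p D S = p ^ #A * (1 - p) ^ (#D - #B) := by
  have disjoint_of_mem {T : Finset ι} (hT : T ∈ (B \ A).powerset) : Disjoint A T :=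
    Finset.disjoint_sdiff.mono_right (Finset.mem_powerset.1 hT)
  have union_injOn : Set.InjOn (A ∪ ·) ((B \ A).powerset : Set (Finset ι)) := by
    intro T hT T' hT' h
    rw [← (disjoint_of_mem hT).sdiff_eq_right, ← (disjoint_of_mem hT').sdiff_eq_right,
      ← Finset.union_sdiff_left A T, ← Finset.union_sdiff_left A T']
    exact congrArg (· \ A) h
  have weight_union {T : Finset ι} (hT : T ∈ (B \ A).powerset) :
      bernoulliWeight p D (A ∪ T) =
        p ^ #A * (1 - p) ^ (#D - #B) * (p ^ #T * (1 - p) ^ (#(B \ A) - #T)) := by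
    have hTB := Finset.card_le_card (Finset.mem_powerset.1 hT)
    have hBA := Finset.card_sdiff_add_card_eq_card hAB
    have hBD' := Finset.card_le_card hBD
    have exponent : #D - (#A + #T) = #D - #B + (#(B \ A) - #T) := by omega
    rw [bernoulliWeight, Finset.card_union_of_disjoint (disjoint_of_mem hT), exponent]
    ring
  rw [Finset.Icc_eq_image_powerset hAB, Finset.sum_image union_injOn,
    Finset.sum_congr rfl fun T hT => weight_union hT, ← Finset.mul_sum,
    Finset.sum_pow_mul_eq_add_pow]
  simp

lemma sum_powerset_bernoulliWeight_mul_card (p : ℝ) (D : Finset ι) :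
    ∑ S ∈ D.powerset, bernoulliWeight p D S * #S = p * #D :=
  calc ∑ S ∈ D.powerset, bernoulliWeight p D S * #S
      = ∑ S ∈ D.powerset, ∑ _i ∈ S, bernoulliWeight p D S := by simp [mul_comm]
    _ = ∑ i ∈ D, ∑ S ∈ Finset.Icc {i} D, bernoulliWeight p D S :=
        Finset.sum_comm' fun S i => by
          simp only [Finset.mem_powerset, Finset.mem_Icc, Finset.singleton_subset_iff]
          exact ⟨fun h => ⟨⟨h.2, h.1⟩, h.1 h.2⟩, fun h => ⟨h.1.2, h.1.1⟩⟩
    _ = ∑ _i ∈ D, p := Finset.sum_congr rfl fun i hi => by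
        rw [sum_Icc_bernoulliWeight p (Finset.singleton_subset_iff.2 hi) subset_rfl]
        simp
    _ = p * #D := by simp [mul_comm]

/-- At most `r` elements `A` of `D` define the configuration `q`, and at most `k` elements, those of
`D \ B`, are in conflict with it: `q ∈ E S` as soon as `S ⊆ D` contains `A` and avoids `D \ B`. -/
def IsConfiguration (D : Finset ι) (E : Finset ι → Finset α) (r k : ℕ) (q : α) : Prop :=
  ∃ A B : Finset ι, A ⊆ B ∧ B ⊆ D ∧ #A ≤ r ∧ #D ≤ #B + k ∧ ∀ S ∈ Finset.Icc A B, q ∈ E S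

variable {D : Finset ι} {E : Finset ι → Finset α} {r k : ℕ} {p C : ℝ} {N : Finset α}

lemma IsConfiguration.le_sum_bernoulliWeight (hp₀ : 0 ≤ p) (hp₁ : p ≤ 1) {q : α}
    (hq : IsConfiguration D E r k q) :
    p ^ r * (1 - p) ^ k ≤ ∑ S ∈ D.powerset with q ∈ E S, bernoulliWeight p D S := by
  obtain ⟨A, B, hAB, hBD, hA, hB, hE⟩ := hq
  calc p ^ r * (1 - p) ^ k
      ≤ p ^ #A * (1 - p) ^ (#D - #B) :=
        mul_le_mul (pow_le_pow_of_le_one hp₀ hp₁ hA)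
          (pow_le_pow_of_le_one (sub_nonneg.2 hp₁) (sub_le_self 1 hp₀) (by omega))
          (pow_nonneg (sub_nonneg.2 hp₁) _) (pow_nonneg hp₀ _)
    _ = ∑ S ∈ Finset.Icc A B, bernoulliWeight p D S := (sum_Icc_bernoulliWeight p hAB hBD).symm
    _ ≤ ∑ S ∈ D.powerset with q ∈ E S, bernoulliWeight p D S := by
        refine Finset.sum_le_sum_of_subset_of_nonneg (fun S hS => ?_)
          fun S _ _ => bernoulliWeight_nonneg hp₀ hp₁ D S
        rw [Finset.mem_filter, Finset.mem_powerset]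
        exact ⟨(Finset.mem_Icc.1 hS).2.trans hBD, hE S hS⟩

lemma clarkson_shor (hp₀ : 0 ≤ p) (hp₁ : p ≤ 1) (hE : ∀ S ⊆ D, (#(E S) : ℝ) ≤ C * #S)
    (hN : ∀ q ∈ N, IsConfiguration D E r k q) :
    #N * (p ^ r * (1 - p) ^ k) ≤ C * (p * #D) :=
  calc #N * (p ^ r * (1 - p) ^ k)
      ≤ ∑ q ∈ N, ∑ S ∈ D.powerset with q ∈ E S, bernoulliWeight p D S := by
        rw [← nsmul_eq_mul]
        exact Finset.card_nsmul_le_sum _ _ _ fun q hq => (hN q hq).le_sum_bernoulliWeight hp₀ hp₁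
    _ = ∑ S ∈ D.powerset, ∑ _ ∈ {q ∈ N | q ∈ E S}, bernoulliWeight p D S :=
        Finset.sum_comm' fun q S => by simp only [Finset.mem_filter]; tauto
    _ = ∑ S ∈ D.powerset, bernoulliWeight p D S * #{q ∈ N | q ∈ E S} := by simp [mul_comm]
    _ ≤ ∑ S ∈ D.powerset, bernoulliWeight p D S * (C * #S) := by
        refine Finset.sum_le_sum fun S hS =>
          mul_le_mul_of_nonneg_left ?_ (bernoulliWeight_nonneg hp₀ hp₁ D S)
        have filter_subset : {q ∈ N | q ∈ E S} ⊆ E S := fun q hq => (Finset.mem_filter.1 hq).2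
        exact (Nat.cast_le.2 (Finset.card_le_card filter_subset)).trans
          (hE S (Finset.mem_powerset.1 hS))
    _ = C * (p * #D) := by
        rw [← sum_powerset_bernoulliWeight_mul_card, Finset.mul_sum]
        exact Finset.sum_congr rfl fun S _ => by ring

lemma clarkson_shor_pairs (hk : 1 ≤ k) (hE : ∀ S ⊆ D, (#(E S) : ℝ) ≤ C * #S)
    (hN : ∀ q ∈ N, IsConfiguration D E 2 k q) :
    (#N : ℝ) ≤ 4 * C * #D * k := by
  have hk' : (1 : ℝ) ≤ k := by exact_mod_cast hk
  set p : ℝ := 1 / (2 * k) with hp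
  have hp₀ : 0 < p := by positivity
  have hpk : k * p = 1 / 2 := by rw [hp]; field_simp
  have hp₁ : p ≤ 1 := by nlinarith
  have half_le_pow : 1 / 2 ≤ (1 - p) ^ k := by
    have bernoulli := one_add_mul_le_pow (a := -p) (by linarith) k
    rw [← sub_eq_add_neg] at bernoulli
    linarith
  have sampled := clarkson_shor hp₀.le hp₁ hE hN
  have cancelled : #N * p * (1 - p) ^ k ≤ C * #D := by
    refine le_of_mul_le_mul_left ?_ hp₀
    linarith
  have halved : #N * p * (1 / 2) ≤ C * #D :=
    (mul_le_mul_of_nonneg_left half_le_pow (by positivity)).trans cancelled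
  calc (#N : ℝ) = 4 * k * (#N * p * (1 / 2)) := by linear_combination (-2 * #N : ℝ) * hpk
    _ ≤ 4 * k * (C * #D) := by gcongr
    _ = 4 * C * #D * k := by ring

end ClarksonShor

section BarVisibility

variable {ι τ β : Type*} [LinearOrder β]
  {S : Finset ι} {b : ι → β} {A : ι → Set τ} {i j i' j' l : ι} {t t' : τ}

/-- Think of `A i` as a horizontal bar at height `b i`. At time `t` the bars `i` and `j` are both
present, `i` is below `j`, and no bar of the family `S` separates them. -/
structure IsConsecutiveAt (S : Finset ι) (b : ι → β) (A : ι → Set τ) (t : τ) (i j : ι) :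
    Prop where
  left_mem : i ∈ S
  right_mem : j ∈ S
  left_present : t ∈ A i
  right_present : t ∈ A j
  lt : b i < b j
  not_between : ∀ l ∈ S, t ∈ A l → ¬(b i < b l ∧ b l < b j)

lemma IsConsecutiveAt.eq_of_overlap (hb : InjOn b S) (h : IsConsecutiveAt S b A t i j)
    (h' : IsConsecutiveAt S b A t i' j') (hij' : b i < b j') (hi'j : b i' < b j) :
    (i, j) = (i', j') := by
  have left_eq : b i = b i' := le_antisymm
    (not_lt.1 fun hlt => h'.not_between i h.left_mem h.left_present ⟨hlt, hij'⟩)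
    (not_lt.1 fun hlt => h.not_between i' h'.left_mem h'.left_present ⟨hlt, hi'j⟩)
  have right_eq : b j = b j' := le_antisymm
    (not_lt.1 fun hlt => h.not_between j' h'.right_mem h'.right_present ⟨hij', hlt⟩)
    (not_lt.1 fun hlt => h'.not_between j h.right_mem h.right_present ⟨hi'j, hlt⟩)
  exact Prod.ext (hb h.left_mem h'.left_mem left_eq) (hb h.right_mem h'.right_mem right_eq)

variable [LinearOrder τ]

/-- The time `t` is the first one after a stay in `A`. -/
def IsExitTime (A : Set τ) (t : τ) : Prop :=
  t ∉ A ∧ ∃ v ∈ A, v ⋖ t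

lemma IsExitTime.unique {A : Set τ} (hA : A.OrdConnected) (h : IsExitTime A t)
    (h' : IsExitTime A t') : t = t' := by
  have not_lt_of_exit {t t' : τ} (h : IsExitTime A t) (h' : IsExitTime A t') : ¬t < t' := by
    obtain ⟨htA, v, hv, hvt⟩ := h
    obtain ⟨-, v', hv', hvt'⟩ := h'
    exact fun hlt => htA (hA.out hv hv' ⟨hvt.le, hvt'.le_of_lt hlt⟩)
  exact le_antisymm (not_lt.1 (not_lt_of_exit h' h)) (not_lt.1 (not_lt_of_exit h h'))

lemma IsConsecutiveAt.exists_cause [Finite τ] (hA : ∀ i ∈ S, (A i).OrdConnected)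
    (h : IsConsecutiveAt S b A t i j) :
    ∃ s, IsConsecutiveAt S b A s i j ∧ (IsLeast (A i) s ∨ IsLeast (A j) s ∨
      ∃ l ∈ S, IsExitTime (A l) s ∧ b i < b l ∧ b l < b j) := by
  obtain ⟨s, hs, hs_min⟩ :=
    Set.exists_min_image {s | IsConsecutiveAt S b A s i j} id (Set.toFinite _) ⟨t, h⟩
  refine ⟨s, hs, ?_⟩
  by_contra! hcon
  obtain ⟨not_entry_i, not_entry_j, not_exit⟩ := hcon
  have exists_earlier {m : ι} (hm : s ∈ A m) (not_entry : ¬IsLeast (A m) s) :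
      ∃ u ∈ A m, u < s := by
    by_contra! hle
    exact not_entry ⟨hm, hle⟩
  obtain ⟨u, hu, hus⟩ := exists_earlier hs.left_present not_entry_i
  obtain ⟨u', hu', hus'⟩ := exists_earlier hs.right_present not_entry_j
  obtain ⟨v, huv, hvs⟩ := exists_le_covBy_of_lt hus
  have i_present : v ∈ A i := (hA i hs.left_mem).out hu hs.left_present ⟨huv, hvs.le⟩
  have j_present : v ∈ A j :=
    (hA j hs.right_mem).out hu' hs.right_present ⟨hvs.le_of_lt hus', hvs.le⟩
  refine (hs_min v ⟨hs.left_mem, hs.right_mem, i_present, j_present, hs.lt, ?_⟩).not_gt hvs.lt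
  rintro l hl hvl ⟨hil, hlj⟩
  have l_exits : IsExitTime (A l) s :=
    ⟨fun hsl => hs.not_between l hl hsl ⟨hil, hlj⟩, v, hvl, hvs⟩
  exact (not_exit l hl l_exits hil).not_gt hlj

lemma card_le_of_isConsecutiveAt_of_finite [Finite τ] (hb : InjOn b S)
    (hA : ∀ i ∈ S, (A i).OrdConnected) {N : Finset (ι × ι)}
    (hN : ∀ q ∈ N, ∃ t, IsConsecutiveAt S b A t q.1 q.2) :
    #N ≤ 3 * #S := by
  let entersLeft (q : ι × ι) (l : ι) : Prop :=
    ∃ s, IsConsecutiveAt S b A s q.1 q.2 ∧ l = q.1 ∧ IsLeast (A l) s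
  let entersRight (q : ι × ι) (l : ι) : Prop :=
    ∃ s, IsConsecutiveAt S b A s q.1 q.2 ∧ l = q.2 ∧ IsLeast (A l) s
  let exitsBetween (q : ι × ι) (l : ι) : Prop :=
    ∃ s, IsConsecutiveAt S b A s q.1 q.2 ∧ IsExitTime (A l) s ∧ b q.1 < b l ∧ b l < b q.2
  have card_left : #{q ∈ N | ∃ l ∈ S, entersLeft q l} ≤ #S := by
    refine Finset.card_le_card_of_forall_subsingleton entersLeft
      (fun q hq => (Finset.mem_filter.1 hq).2) ?_
    rintro l - ⟨i, j⟩ ⟨-, s, hs, rfl, hl⟩ ⟨i', j'⟩ ⟨-, s', hs', rfl, hl'⟩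
    obtain rfl := hl.unique hl'
    exact hs.eq_of_overlap hb hs' hs'.lt hs.lt
  have card_right : #{q ∈ N | ∃ l ∈ S, entersRight q l} ≤ #S := by
    refine Finset.card_le_card_of_forall_subsingleton entersRight
      (fun q hq => (Finset.mem_filter.1 hq).2) ?_
    rintro l - ⟨i, j⟩ ⟨-, s, hs, rfl, hl⟩ ⟨i', j'⟩ ⟨-, s', hs', rfl, hl'⟩
    obtain rfl := hl.unique hl'
    exact hs.eq_of_overlap hb hs' hs.lt hs'.lt
  have card_between : #{q ∈ N | ∃ l ∈ S, exitsBetween q l} ≤ #S := by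
    refine Finset.card_le_card_of_forall_subsingleton exitsBetween
      (fun q hq => (Finset.mem_filter.1 hq).2) ?_
    rintro l hl ⟨i, j⟩ ⟨-, s, hs, hexit, hil, hlj⟩ ⟨i', j'⟩ ⟨-, s', hs', hexit', hil', hlj'⟩
    obtain rfl := hexit.unique (hA l hl) hexit'
    exact hs.eq_of_overlap hb hs' (hil.trans hlj') (hil'.trans hlj)
  have cover : N ⊆ {q ∈ N | ∃ l ∈ S, entersLeft q l} ∪
      ({q ∈ N | ∃ l ∈ S, entersRight q l} ∪ {q ∈ N | ∃ l ∈ S, exitsBetween q l}) := by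
    intro q hq
    simp only [Finset.mem_union, Finset.mem_filter, hq, true_and]
    obtain ⟨t, ht⟩ := hN q hq
    obtain ⟨s, hs, hl | hr | ⟨l, hlS, hbetween⟩⟩ := ht.exists_cause hA
    · exact .inl ⟨q.1, hs.left_mem, s, hs, rfl, hl⟩
    · exact .inr (.inl ⟨q.2, hs.right_mem, s, hs, rfl, hr⟩)
    · exact .inr (.inr ⟨l, hlS, s, hs, hbetween⟩)
  have := Finset.card_le_card cover
  grind [Finset.card_union_le]

lemma card_le_of_isConsecutiveAt (hb : InjOn b S) (hA : ∀ i ∈ S, (A i).OrdConnected)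
    {N : Finset (ι × ι)} (hN : ∀ q ∈ N, ∃ t, IsConsecutiveAt S b A t q.1 q.2) :
    #N ≤ 3 * #S := by
  choose time htime using hN
  let T : Finset τ := N.attach.image fun q : {q // q ∈ N} => time q.1 q.2
  refine card_le_of_isConsecutiveAt_of_finite (τ := T) (A := fun i => Subtype.val ⁻¹' A i) hb
    (fun i hi => (hA i hi).preimage_mono (Subtype.mono_coe _)) fun q hq => ?_
  have time_mem : time q hq ∈ T := Finset.mem_image_of_mem _ (Finset.mem_attach N ⟨q, hq⟩)
  have hq' := htime q hq
  exact ⟨⟨time q hq, time_mem⟩, hq'.left_mem, hq'.right_mem, hq'.left_present, hq'.right_present,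
    hq'.lt, fun l hl hmem => hq'.not_between l hl hmem⟩

end BarVisibility

lemma card_critical_le_of_biInter_eq_empty {ι E : Type*} [AddCommGroup E] [Module ℝ E]
    [FiniteDimensional ℝ E] {F : ι → Set E} {s : Finset ι} (hF : ∀ i ∈ s, Convex ℝ (F i))
    (hs : ⋂ i ∈ s, F i = ∅) :
    #{i ∈ s | (⋂ l ∈ s.erase i, F l).Nonempty} ≤ Module.finrank ℝ E + 1 := by
  obtain ⟨I, hIs, hI_card, hI⟩ :
      ∃ I ⊆ s, #I ≤ Module.finrank ℝ E + 1 ∧ ¬(⋂ i ∈ I, F i).Nonempty := by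
    by_contra! hcon
    exact (Convex.helly_theorem' hF hcon).ne_empty hs
  refine (Finset.card_le_card fun i hi => ?_).trans hI_card
  by_contra hiI
  have I_subset : I ⊆ s.erase i :=
    Finset.subset_erase.2 ⟨hIs, hiI⟩
  exact hI ((Finset.mem_filter.1 hi).2.mono (Set.biInter_subset_biInter_left I_subset))

section MaxCell

variable {ι E : Type*} [AddCommGroup E] [Module ℝ E]

/-- The region where `f i` strictly exceeds all other members of the family `f` on `S`. For the
affine functions obtained by lifting disks these are the cells of the power diagram. -/
def maxCell (f : ι → E →ᵃ[ℝ] ℝ) (S : Finset ι) (i : ι) : Set E :=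
  ⋂ l ∈ S.erase i, {p | f l p < f i p}

/-- Somewhere `f i` and `f j` agree and strictly exceed the rest of the family: the max cells of
`i` and `j` share a wall. -/
def IsNeighborPair (f : ι → E →ᵃ[ℝ] ℝ) (S : Finset ι) (i j : ι) : Prop :=
  ∃ p ∈ maxCell f (S.erase i) j, f i p = f j p

/-- Somewhere `f i` and `f j` are the two largest members of the family on `S`. -/
def IsTopPair (f : ι → E →ᵃ[ℝ] ℝ) (S : Finset ι) (i j : ι) : Prop :=
  ∃ p, ∀ l ∈ S, l ≠ i → l ≠ j → f l p < f i p ∧ f l p < f j p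

/-- The function `f j` is nowhere the largest one, but becomes so after the deletion of `i`. -/
def IsHiddenBy (f : ι → E →ᵃ[ℝ] ℝ) (S : Finset ι) (j i : ι) : Prop :=
  maxCell f S j = ∅ ∧ (maxCell f (S.erase i) j).Nonempty

variable {f : ι → E →ᵃ[ℝ] ℝ} {S : Finset ι} {i j : ι} {p : E}

lemma mem_maxCell : p ∈ maxCell f S i ↔ ∀ l ∈ S, l ≠ i → f l p < f i p := by
  simp only [maxCell, Set.mem_iInter, Finset.mem_erase, Set.mem_ofPred_eq]
  exact ⟨fun h l hl hli => h l ⟨hli, hl⟩, fun h l hl => h l hl.2 hl.1⟩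

lemma mem_maxCell_erase :
    p ∈ maxCell f (S.erase i) j ↔ ∀ l ∈ S, l ≠ i → l ≠ j → f l p < f j p := by
  simp only [mem_maxCell, Finset.mem_erase]
  exact ⟨fun h l hl hli => h l ⟨hli, hl⟩, fun h l hl => h l hl.2 hl.1⟩

lemma mem_maxCell_of_mem_maxCell_erase (hp : p ∈ maxCell f (S.erase i) j) (hij : f i p < f j p) :
    p ∈ maxCell f S j :=
  mem_maxCell.2 fun l hl hlj => by
    by_cases hli : l = i
    · exact hli ▸ hij
    · exact mem_maxCell_erase.1 hp l hl hli hlj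

lemma convex_setOf_affineMap_lt (g h : E →ᵃ[ℝ] ℝ) : Convex ℝ {p | g p < h p} := by
  have := (convex_Iio (𝕜 := ℝ) (0 : ℝ)).affine_preimage (g - h)
  simpa only [Set.preimage, Set.mem_Iio, AffineMap.coe_sub, Pi.sub_apply, sub_neg] using this

lemma convex_maxCell (f : ι → E →ᵃ[ℝ] ℝ) (S : Finset ι) (i : ι) : Convex ℝ (maxCell f S i) :=
  convex_iInter₂ fun l _ => convex_setOf_affineMap_lt (f l) (f i)

lemma mem_maxCell_erase_of_eq (hp : p ∈ maxCell f (S.erase i) j) (hij : f i p = f j p) :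
    p ∈ maxCell f (S.erase j) i :=
  mem_maxCell_erase.2 fun l hl hlj hli => hij ▸ mem_maxCell_erase.1 hp l hl hli hlj

lemma IsNeighborPair.symm (h : IsNeighborPair f S i j) : IsNeighborPair f S j i := by
  obtain ⟨p, hp, hij⟩ := h
  exact ⟨p, mem_maxCell_erase_of_eq hp hij, hij.symm⟩

lemma isNeighborPair_or_isHiddenBy_of_le (hi : i ∈ S) (hij : i ≠ j)
    (hp : p ∈ maxCell f (S.erase i) j) (hle : f j p ≤ f i p) :
    IsNeighborPair f S i j ∨ IsHiddenBy f S j i := by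
  rcases (maxCell f S j).eq_empty_or_nonempty with hempty | ⟨p', hp'⟩
  · exact .inr ⟨hempty, p, hp⟩
  · left
    have hp'_erase : p' ∈ maxCell f (S.erase i) j :=
      mem_maxCell_erase.2 fun l hl _ hlj => mem_maxCell.1 hp' l hl hlj
    have hlt : f i p' < f j p' := mem_maxCell.1 hp' i hi hij
    have zero_mem : (0 : ℝ) ∈ (f i - f j) '' segment ℝ p p' := by
      rw [image_segment, segment_eq_uIcc]
      exact Set.mem_uIcc.2 (.inr ⟨(sub_neg.2 hlt).le, sub_nonneg.2 hle⟩)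
    obtain ⟨q, hq, hzero⟩ := zero_mem
    exact ⟨q, (convex_maxCell f (S.erase i) j).segment_subset hp hp'_erase hq,
      sub_eq_zero.1 hzero⟩

lemma IsTopPair.isNeighborPair_or_isHiddenBy (hi : i ∈ S) (hj : j ∈ S) (hij : i ≠ j)
    (h : IsTopPair f S i j) :
    IsNeighborPair f S i j ∨ IsHiddenBy f S i j ∨ IsHiddenBy f S j i := by
  obtain ⟨p, hp⟩ := h
  rcases le_total (f j p) (f i p) with hle | hle
  · have := isNeighborPair_or_isHiddenBy_of_le hi hij
      (mem_maxCell_erase.2 fun l hl hli hlj => (hp l hl hli hlj).2) hle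
    exact this.imp_right .inr
  · have := isNeighborPair_or_isHiddenBy_of_le hj hij.symm
      (mem_maxCell_erase.2 fun l hl hlj hli => (hp l hl hli hlj).1) hle
    exact this.imp IsNeighborPair.symm .inl

lemma IsTopPair.eventually_add_smul (h : IsTopPair f S i j) (g : ι → E →ᵃ[ℝ] ℝ) :
    ∀ᶠ ε : ℝ in 𝓝 0, IsTopPair (fun l => f l + ε • g l) S i j := by
  obtain ⟨p, hp⟩ := h
  have hcont (l : ι) : Filter.Tendsto (fun ε : ℝ => (f l + ε • g l) p) (𝓝 0) (𝓝 (f l p)) := by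
    have : Continuous fun ε : ℝ => (f l + ε • g l) p := by
      simp only [AffineMap.coe_add, AffineMap.coe_smul, Pi.add_apply, Pi.smul_apply]
      fun_prop
    simpa using this.tendsto 0
  have persists : ∀ᶠ ε : ℝ in 𝓝 0, ∀ l ∈ S, l ≠ i → l ≠ j →
      (f l + ε • g l) p < (f i + ε • g i) p ∧ (f l + ε • g l) p < (f j + ε • g j) p := by
    refine (Filter.eventually_all_finset S).2 fun l hl => ?_
    simp only [Filter.eventually_imp_distrib_left]
    intro hli hlj
    exact ((hcont l).eventually_lt (hcont i) (hp l hl hli hlj).1).and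
      ((hcont l).eventually_lt (hcont j) (hp l hl hli hlj).2)
  exact persists.mono fun ε hε => ⟨p, hε⟩

lemma card_isHiddenBy_le [FiniteDimensional ℝ E] (f : ι → E →ᵃ[ℝ] ℝ) (S : Finset ι) :
    #{q ∈ S.offDiag | IsHiddenBy f S q.1 q.2} ≤ (Module.finrank ℝ E + 1) * #S := by
  refine Finset.card_le_mul_card_image_of_maps_to (f := Prod.fst) (t := S)
    (fun q hq => (Finset.mem_offDiag.1 (Finset.mem_filter.1 hq).1).1) _ fun j _ => ?_
  rcases (maxCell f S j).eq_empty_or_nonempty with hempty | hnonempty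
  · refine le_trans ?_ (card_critical_le_of_biInter_eq_empty
      (fun l _ => convex_setOf_affineMap_lt (f l) (f j)) hempty)
    refine Finset.card_le_card_of_injOn Prod.snd ?_ ?_
    · rintro ⟨j', i⟩ hq
      simp only [Finset.coe_filter, Finset.mem_filter, Finset.mem_offDiag,
        Set.mem_ofPred_eq] at hq ⊢
      obtain ⟨⟨⟨-, hi, hji⟩, -, hcrit⟩, rfl⟩ := hq
      exact ⟨Finset.mem_erase.2 ⟨hji.symm, hi⟩, by rwa [Finset.erase_right_comm]⟩
    · intro q hq q' hq' hsnd
      exact Prod.ext ((Finset.mem_filter.1 hq).2.trans (Finset.mem_filter.1 hq').2.symm) hsnd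
  · have hidden_empty : {q ∈ {q ∈ S.offDiag | IsHiddenBy f S q.1 q.2} | q.1 = j} = ∅ := by
      refine Finset.filter_eq_empty_iff.2 fun q hq hqj => ?_
      exact hnonempty.ne_empty (hqj ▸ (Finset.mem_filter.1 hq).2.1)
    rw [hidden_empty, Finset.card_empty]
    exact Nat.zero_le _

end MaxCell

section TopologicalMaxCell

variable {ι E : Type*} [NormedAddCommGroup E] [NormedSpace ℝ E] [FiniteDimensional ℝ E]
  {f : ι → E →ᵃ[ℝ] ℝ} {S : Finset ι} {i j : ι} {p v : E}

lemma isOpen_maxCell (f : ι → E →ᵃ[ℝ] ℝ) (S : Finset ι) (i : ι) : IsOpen (maxCell f S i) :=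
  isOpen_biInter_finset fun l _ =>
    isOpen_lt (f l).continuous_of_finiteDimensional (f i).continuous_of_finiteDimensional

lemma exists_add_smul_mem_maxCell (hp : p ∈ maxCell f (S.erase i) j) (hij : f i p = f j p)
    (hv : (f i).linear v < (f j).linear v) : ∃ ε : ℝ, p + ε • v ∈ maxCell f S j := by
  have stays : ∀ᶠ ε : ℝ in 𝓝[>] 0, p + ε • v ∈ maxCell f (S.erase i) j := by
    have hcont : ContinuousAt (fun ε : ℝ => p + ε • v) 0 := by fun_prop
    refine (hcont.eventually_mem ?_).filter_mono nhdsWithin_le_nhds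
    simpa using (isOpen_maxCell f (S.erase i) j).mem_nhds hp
  obtain ⟨ε, hε, hε₀ : 0 < ε⟩ := (stays.and self_mem_nhdsWithin).exists
  refine ⟨ε, mem_maxCell_of_mem_maxCell_erase hε ?_⟩
  rw [add_comm p, ← vadd_eq_add, AffineMap.map_vadd, AffineMap.map_vadd, hij, map_smul, map_smul]
  simpa using mul_lt_mul_of_pos_left hv hε₀

end TopologicalMaxCell

section PlanarMaxCell

variable {ι : Type*} {f : ι → Plane →ᵃ[ℝ] ℝ} {S : Finset ι} {i j : ι} {p : Plane}

/-- The slope of an affine function on the plane along the vertical lines `p 0 = const`, which are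
the sweep lines of the counting argument. -/
def verticalSlope (g : Plane →ᵃ[ℝ] ℝ) : ℝ :=
  g.linear (EuclideanSpace.single 1 1)

lemma affineMap_apply_eq_add_mul_verticalSlope (g : Plane →ᵃ[ℝ] ℝ) {p q : Plane}
    (h : p 0 = q 0) : g q = g p + (q 1 - p 1) * verticalSlope g := by
  have vertical : q = (q 1 - p 1) • (EuclideanSpace.single 1 1 : Plane) +ᵥ p := by
    ext x
    fin_cases x <;> simp [h]
  conv_lhs => rw [vertical, AffineMap.map_vadd, map_smul, smul_eq_mul, vadd_eq_add]
  rw [verticalSlope, add_comm]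

/-- The shadow on the horizontal axis of the region where `f i` is the largest function. -/
def cellShadow (f : ι → Plane →ᵃ[ℝ] ℝ) (S : Finset ι) (i : ι) : Set ℝ :=
  (EuclideanSpace.proj (𝕜 := ℝ) (0 : Fin 2)) '' maxCell f S i

lemma ordConnected_cellShadow (f : ι → Plane →ᵃ[ℝ] ℝ) (S : Finset ι) (i : ι) :
    (cellShadow f S i).OrdConnected :=
  ((convex_maxCell f S i).linear_image
    (EuclideanSpace.proj (𝕜 := ℝ) (0 : Fin 2) : Plane →L[ℝ] ℝ).toLinearMap).ordConnected

lemma mem_cellShadow_of_verticalSlope_ne (hp : p ∈ maxCell f (S.erase i) j) (hij : f i p = f j p)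
    (hslope : verticalSlope (f i) ≠ verticalSlope (f j)) : p 0 ∈ cellShadow f S j := by
  obtain ⟨v, hv₀, hv⟩ : ∃ v : Plane, v 0 = 0 ∧ (f i).linear v < (f j).linear v := by
    rcases hslope.lt_or_gt with hlt | hgt
    · exact ⟨EuclideanSpace.single 1 1, by simp, hlt⟩
    · exact ⟨-EuclideanSpace.single 1 1, by simp, by simpa only [map_neg, neg_lt_neg_iff]⟩
  obtain ⟨ε, hε⟩ := exists_add_smul_mem_maxCell hp hij hv
  exact ⟨p + ε • v, hε, by simp [hv₀]⟩

lemma notMem_cellShadow_of_verticalSlope_between (hi : i ∈ S) (hj : j ∈ S)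
    (hp : p ∈ maxCell f (S.erase i) j) (hij : f i p = f j p) {l : ι} (hl : l ∈ S)
    (hil : verticalSlope (f i) < verticalSlope (f l))
    (hlj : verticalSlope (f l) < verticalSlope (f j)) : p 0 ∉ cellShadow f S l := by
  rintro ⟨q, hq, hpq : q 0 = p 0⟩
  have hli : l ≠ i := by rintro rfl; exact hil.false
  have hlj' : l ≠ j := by rintro rfl; exact hlj.false
  have below_at_p : f l p < f j p := mem_maxCell_erase.1 hp l hl hli hlj'
  have above_i : f i q < f l q := mem_maxCell.1 hq i hi hli.symm
  have above_j : f j q < f l q := mem_maxCell.1 hq j hj hlj'.symm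
  have along (m : ι) := affineMap_apply_eq_add_mul_verticalSlope (f m) hpq.symm
  rcases le_total (p 1) (q 1) with hup | hdown
  · have := mul_le_mul_of_nonneg_left hlj.le (sub_nonneg.2 hup)
    linarith [along j, along l]
  · have := mul_le_mul_of_nonpos_left hil.le (sub_nonpos.2 hdown)
    linarith [along i, along l]

lemma IsNeighborPair.exists_isConsecutiveAt (hi : i ∈ S) (hj : j ∈ S) (h : IsNeighborPair f S i j)
    (hslope : verticalSlope (f i) < verticalSlope (f j)) :
    ∃ t, IsConsecutiveAt S (fun m => verticalSlope (f m)) (cellShadow f S) t i j := by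
  obtain ⟨p, hp, hij⟩ := h
  have left_present : p 0 ∈ cellShadow f S i := mem_cellShadow_of_verticalSlope_ne
    (mem_maxCell_erase_of_eq hp hij) hij.symm hslope.ne'
  exact ⟨p 0, hi, hj, left_present, mem_cellShadow_of_verticalSlope_ne hp hij hslope.ne, hslope,
    fun l hl hmem hbetween => notMem_cellShadow_of_verticalSlope_between hi hj hp hij hl
      hbetween.1 hbetween.2 hmem⟩

lemma card_isNeighborPair_le (hslope : InjOn (fun m => verticalSlope (f m)) S) :
    #{q ∈ S.offDiag | IsNeighborPair f S q.1 q.2} ≤ 6 * #S := by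
  set P := {q ∈ S.offDiag | IsNeighborPair f S q.1 q.2}
  set ascending := {q ∈ P | verticalSlope (f q.1) < verticalSlope (f q.2)}
  have card_ascending : #ascending ≤ 3 * #S := by
    refine card_le_of_isConsecutiveAt hslope (fun i _ => ordConnected_cellShadow f S i) ?_
    intro q hq
    obtain ⟨hqP, hlt⟩ := Finset.mem_filter.1 hq
    obtain ⟨hq_offDiag, hneighbor⟩ := Finset.mem_filter.1 hqP
    obtain ⟨hi, hj, -⟩ := Finset.mem_offDiag.1 hq_offDiag
    exact hneighbor.exists_isConsecutiveAt hi hj hlt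
  have cover : P ⊆ ascending ∪ ascending.image Prod.swap := by
    intro q hqP
    obtain ⟨hq_offDiag, hneighbor⟩ := Finset.mem_filter.1 hqP
    obtain ⟨hi, hj, hij⟩ := Finset.mem_offDiag.1 hq_offDiag
    rcases (hslope.ne hi hj hij).lt_or_gt with hlt | hgt
    · exact Finset.mem_union_left _ (Finset.mem_filter.2 ⟨hqP, hlt⟩)
    · refine Finset.mem_union_right _ (Finset.mem_image.2 ⟨q.swap, ?_, q.swap_swap⟩)
      have swap_mem : q.swap ∈ P :=
        Finset.mem_filter.2 ⟨Finset.mem_offDiag.2 ⟨hj, hi, hij.symm⟩, hneighbor.symm⟩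
      exact Finset.mem_filter.2 ⟨swap_mem, hgt⟩
  calc #P ≤ #ascending + #(ascending.image Prod.swap) :=
        (Finset.card_le_card cover).trans (Finset.card_union_le _ _)
    _ ≤ #ascending + #ascending := Nat.add_le_add_left Finset.card_image_le _
    _ ≤ 6 * #S := by omega

lemma card_isTopPair_le_of_injOn (hslope : InjOn (fun m => verticalSlope (f m)) S) :
    #{q ∈ S.offDiag | IsTopPair f S q.1 q.2} ≤ 12 * #S := by
  set neighbor := {q ∈ S.offDiag | IsNeighborPair f S q.1 q.2}
  set hidden := {q ∈ S.offDiag | IsHiddenBy f S q.1 q.2}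
  have card_neighbor : #neighbor ≤ 6 * #S := card_isNeighborPair_le hslope
  have card_hidden : #hidden ≤ 3 * #S := by
    simpa only [finrank_euclideanSpace_fin] using card_isHiddenBy_le f S
  have cover : {q ∈ S.offDiag | IsTopPair f S q.1 q.2} ⊆
      neighbor ∪ (hidden ∪ hidden.image Prod.swap) := by
    intro q hq
    obtain ⟨hq_offDiag, htop⟩ := Finset.mem_filter.1 hq
    obtain ⟨hi, hj, hij⟩ := Finset.mem_offDiag.1 hq_offDiag
    rcases htop.isNeighborPair_or_isHiddenBy hi hj hij with h | h | h
    · exact Finset.mem_union_left _ (Finset.mem_filter.2 ⟨hq_offDiag, h⟩)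
    · exact Finset.mem_union_right _
        (Finset.mem_union_left _ (Finset.mem_filter.2 ⟨hq_offDiag, h⟩))
    · refine Finset.mem_union_right _ (Finset.mem_union_right _ ?_)
      have swap_mem : q.swap ∈ hidden :=
        Finset.mem_filter.2 ⟨Finset.mem_offDiag.2 ⟨hj, hi, hij.symm⟩, h⟩
      exact Finset.mem_image.2 ⟨q.swap, swap_mem, q.swap_swap⟩
  calc #{q ∈ S.offDiag | IsTopPair f S q.1 q.2}
      ≤ #neighbor + #(hidden ∪ hidden.image Prod.swap) :=
        (Finset.card_le_card cover).trans (Finset.card_union_le _ _)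
    _ ≤ #neighbor + (#hidden + #(hidden.image Prod.swap)) :=
        Nat.add_le_add_left (Finset.card_union_le _ _) _
    _ ≤ #neighbor + (#hidden + #hidden) :=
        Nat.add_le_add_left (Nat.add_le_add_left Finset.card_image_le _) _
    _ ≤ 12 * #S := by omega

lemma eventually_injOn_add_mul (a : ι → ℝ) {m : ι → ℝ} (hm : InjOn m S) :
    ∀ᶠ ε : ℝ in 𝓝[≠] 0, InjOn (fun i => a i + ε * m i) S := by
  have collision_finite {i j : ι} (hi : i ∈ S) (hj : j ∈ S) (hij : i ≠ j) :
      {ε : ℝ | a i + ε * m i = a j + ε * m j}.Finite := by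
    refine Set.Subsingleton.finite fun ε (hε : _ = _) ε' (hε' : _ = _) => ?_
    exact mul_right_cancel₀ (sub_ne_zero.2 (hm.ne hi hj hij)) (by linarith)
  have no_collision : ∀ᶠ ε : ℝ in Filter.cofinite, ∀ i ∈ S, ∀ j ∈ S, i ≠ j →
      a i + ε * m i ≠ a j + ε * m j :=
    (Filter.eventually_all_finset S).2 fun i hi => (Filter.eventually_all_finset S).2 fun j hj =>
      Filter.eventually_imp_distrib_left.2 fun hij =>
        (collision_finite hi hj hij).compl_mem_cofinite
  refine (no_collision.filter_mono (nhdsNE_le_cofinite 0)).mono fun ε hε i hi j hj heq => ?_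
  exact not_not.1 fun hij => hε i hi j hj hij heq

lemma exists_injOn_verticalSlope_and_isTopPair (f : ι → Plane →ᵃ[ℝ] ℝ) (S : Finset ι) :
    ∃ g : ι → Plane →ᵃ[ℝ] ℝ, InjOn (fun i => verticalSlope (g i)) S ∧
      ∀ i ∈ S, ∀ j ∈ S, IsTopPair f S i j → IsTopPair g S i j := by
  obtain ⟨m, hm⟩ := Set.countable_iff_exists_injOn.1 S.countable_toSet
  let height : Plane →ᵃ[ℝ] ℝ := (EuclideanSpace.proj (𝕜 := ℝ) (1 : Fin 2)).toLinearMap.toAffineMap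
  let g (ε : ℝ) (i : ι) : Plane →ᵃ[ℝ] ℝ := f i + ε • (m i : ℝ) • height
  have slope_g (ε : ℝ) (i : ι) : verticalSlope (g ε i) = verticalSlope (f i) + ε * m i := by
    simp [verticalSlope, g, height]
  have slopes_distinct : ∀ᶠ ε : ℝ in 𝓝[≠] 0, InjOn (fun i => verticalSlope (g ε i)) S := by
    simp only [slope_g]
    exact eventually_injOn_add_mul _ (Nat.cast_injective.comp_injOn hm)
  have top_persists : ∀ᶠ ε : ℝ in 𝓝 0, ∀ i ∈ S, ∀ j ∈ S, IsTopPair f S i j →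
      IsTopPair (g ε) S i j :=
    (Filter.eventually_all_finset S).2 fun i _ => (Filter.eventually_all_finset S).2 fun j _ =>
      Filter.eventually_imp_distrib_left.2 fun h => h.eventually_add_smul _
  obtain ⟨ε, hε⟩ := (slopes_distinct.and (top_persists.filter_mono nhdsWithin_le_nhds)).exists
  exact ⟨g ε, hε⟩

lemma card_isTopPair_le (f : ι → Plane →ᵃ[ℝ] ℝ) (S : Finset ι) :
    #{q ∈ S.offDiag | IsTopPair f S q.1 q.2} ≤ 12 * #S := by
  obtain ⟨g, hslope, hg⟩ := exists_injOn_verticalSlope_and_isTopPair f S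
  refine (Finset.card_le_card ?_).trans (card_isTopPair_le_of_injOn (f := g) hslope)
  intro q hq
  obtain ⟨hq_offDiag, htop⟩ := Finset.mem_filter.1 hq
  obtain ⟨hi, hj, -⟩ := Finset.mem_offDiag.1 hq_offDiag
  exact Finset.mem_filter.2 ⟨hq_offDiag, hg _ hi _ hj htop⟩

end PlanarMaxCell

section ShallowPairs

/-- Some point `(p, z)` below the graphs of `f i` and `f j` is below at most `k` of the graphs of
the family on `D`. -/
def IsShallowPair {ι E : Type*} [AddCommGroup E] [Module ℝ E] (f : ι → E →ᵃ[ℝ] ℝ) (D : Finset ι)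
    (k : ℕ) (i j : ι) : Prop :=
  ∃ p z, z ≤ f i p ∧ z ≤ f j p ∧ #{l ∈ D | z ≤ f l p} ≤ k

lemma IsShallowPair.isConfiguration {ι E : Type*} [AddCommGroup E] [Module ℝ E]
    {f : ι → E →ᵃ[ℝ] ℝ} {D : Finset ι} {k : ℕ} {i j : ι} (hij : (i, j) ∈ D.offDiag)
    (h : IsShallowPair f D k i j) :
    IsConfiguration D (fun S => {q ∈ S.offDiag | IsTopPair f S q.1 q.2}) 2 k (i, j) := by
  obtain ⟨p, z, hzi, hzj, hdepth⟩ := h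
  obtain ⟨hi, hj, hne⟩ := Finset.mem_offDiag.1 hij
  have hpair : {i, j} ⊆ D := Finset.insert_subset hi (Finset.singleton_subset_iff.2 hj)
  set conflict := {l ∈ D | z ≤ f l p} \ {i, j}
  have conflict_subset : conflict ⊆ {l ∈ D | z ≤ f l p} := Finset.sdiff_subset
  refine ⟨{i, j}, D \ conflict, ?_, Finset.sdiff_subset, Finset.card_le_two, ?_, ?_⟩
  · exact Finset.subset_sdiff.2 ⟨hpair, Finset.disjoint_sdiff⟩
  · have := Finset.card_sdiff_add_card_eq_card
      (conflict_subset.trans (Finset.filter_subset (fun l => z ≤ f l p) D))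
    have := Finset.card_le_card conflict_subset
    omega
  · intro S hS
    obtain ⟨hpairS, hSD⟩ := Finset.mem_Icc.1 hS
    have hiS : i ∈ S := hpairS (Finset.mem_insert_self i _)
    have hjS : j ∈ S := hpairS (Finset.mem_insert_of_mem (Finset.mem_singleton_self j))
    refine Finset.mem_filter.2 ⟨Finset.mem_offDiag.2 ⟨hiS, hjS, hne⟩, p, fun l hl hli hlj => ?_⟩
    have below : f l p < z := by
      by_contra! hle
      obtain ⟨hlD, hl_conflict⟩ := Finset.mem_sdiff.1 (hSD hl)
      refine hl_conflict (Finset.mem_sdiff.2 ⟨Finset.mem_filter.2 ⟨hlD, hle⟩, ?_⟩)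
      simp [hli, hlj]
    exact ⟨below.trans_le hzi, below.trans_le hzj⟩

lemma card_isShallowPair_le {ι : Type*} (f : ι → Plane →ᵃ[ℝ] ℝ) (D : Finset ι) {k : ℕ}
    (hk : 1 ≤ k) :
    (#{q ∈ D.offDiag | IsShallowPair f D k q.1 q.2} : ℝ) ≤ 48 * #D * k := by
  have configurations : ∀ q ∈ {q ∈ D.offDiag | IsShallowPair f D k q.1 q.2},
      IsConfiguration D (fun S => {q ∈ S.offDiag | IsTopPair f S q.1 q.2}) 2 k q := fun q hq =>
    (Finset.mem_filter.1 hq).2.isConfiguration (Finset.mem_filter.1 hq).1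
  have := clarkson_shor_pairs (C := 12) hk
    (fun S _ => by exact_mod_cast card_isTopPair_le f S) configurations
  linarith

end ShallowPairs

section DiskLift

/-- The affine function whose graph is the plane cutting the paraboloid `z = ‖p‖ ^ 2` above the
sphere with center `c` and radius `r`. -/
def powerLift {E : Type*} [NormedAddCommGroup E] [InnerProductSpace ℝ E] (c : E) (r : ℝ) :
    E →ᵃ[ℝ] ℝ :=
  ((2 : ℝ) • innerₗ E c).toAffineMap + AffineMap.const ℝ E (r ^ 2 - ‖c‖ ^ 2)

lemma mem_closedBall_iff_le_powerLift {E : Type*} [NormedAddCommGroup E] [InnerProductSpace ℝ E]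
    {c p : E} {r : ℝ} (hr : 0 ≤ r) : p ∈ closedBall c r ↔ ‖p‖ ^ 2 ≤ powerLift c r p := by
  have lift_apply : powerLift c r p = 2 * inner ℝ c p + (r ^ 2 - ‖c‖ ^ 2) := by
    simp [powerLift]
  rw [mem_closedBall_iff_norm, ← sq_le_sq₀ (norm_nonneg _) hr, norm_sub_sq_real,
    real_inner_comm, lift_apply]
  constructor <;> intro h <;> linarith

lemma exists_forall_mem_iff_le_of_isDisk {D : Finset (Set Plane)} (hD : ∀ d ∈ D, IsDisk d) :
    ∃ f : Set Plane → Plane →ᵃ[ℝ] ℝ, ∀ d ∈ D, ∀ p, p ∈ d ↔ ‖p‖ ^ 2 ≤ f d p := by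
  choose! center radius radius_pos d_eq using hD
  refine ⟨fun d => powerLift (center d) (radius d), fun d hd p => ?_⟩
  rw [← mem_closedBall_iff_le_powerLift (radius_pos d hd).le, ← d_eq d hd]

lemma diskDepth_eq_card_filter (D : Finset (Set Plane)) (p : Plane) :
    diskDepth D p = #{d ∈ D | p ∈ d} := by
  rw [diskDepth, ← Set.ncard_coe_finset, Finset.coe_filter]

lemma card_offDiag_shallow_disks_le {D : Finset (Set Plane)} (hD : ∀ d ∈ D, IsDisk d) {k : ℕ}
    (hk : 1 ≤ k) :
    (#{q ∈ D.offDiag | ∃ p ∈ q.1 ∩ q.2, diskDepth D p ≤ k} : ℝ) ≤ 48 * #D * k := by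
  obtain ⟨f, hf⟩ := exists_forall_mem_iff_le_of_isDisk hD
  refine le_trans (Nat.cast_le.2 (Finset.card_le_card ?_)) (card_isShallowPair_le f D hk)
  intro q hq
  obtain ⟨hq_offDiag, p, ⟨hp₁, hp₂⟩, hdepth⟩ := Finset.mem_filter.1 hq
  obtain ⟨hd₁, hd₂, -⟩ := Finset.mem_offDiag.1 hq_offDiag
  refine Finset.mem_filter.2
    ⟨hq_offDiag, p, ‖p‖ ^ 2, (hf _ hd₁ p).1 hp₁, (hf _ hd₂ p).1 hp₂, ?_⟩
  rwa [← Finset.filter_congr fun d hd => hf d hd p, ← diskDepth_eq_card_filter]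

end DiskLift

theorem bipartite_shallow_edges_count_general (D₁ D₂ : Finset (Set Plane))
    (hD : ∀ d ∈ D₁ ∪ D₂, IsDisk d) (k : ℕ) (hk : 1 ≤ k) :
    (({q : Set Plane × Set Plane | q.1 ∈ D₁ ∧ q.2 ∈ D₂ ∧
        ∃ p : Plane, p ∈ q.1 ∩ q.2 ∧ diskDepth (D₁ ∪ D₂) p ≤ k}).ncard : ℝ)
      ≤ 49 * (D₁.card + D₂.card) * k := by
  set offDiagonal :=
    {q ∈ (D₁ ∪ D₂).offDiag | ∃ p ∈ q.1 ∩ q.2, diskDepth (D₁ ∪ D₂) p ≤ k}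
  have cover : {q : Set Plane × Set Plane | q.1 ∈ D₁ ∧ q.2 ∈ D₂ ∧
      ∃ p : Plane, p ∈ q.1 ∩ q.2 ∧ diskDepth (D₁ ∪ D₂) p ≤ k} ⊆
      ↑(offDiagonal ∪ D₁.diag) := by
    rintro ⟨d₁, d₂⟩ ⟨h₁, h₂, hshallow⟩
    rw [Finset.coe_union]
    by_cases heq : d₁ = d₂
    · exact .inr (Finset.mem_diag.2 ⟨h₁, heq⟩)
    · have mem_offDiag : (d₁, d₂) ∈ (D₁ ∪ D₂).offDiag := Finset.mem_offDiag.2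
        ⟨Finset.mem_union_left D₂ h₁, Finset.mem_union_right D₁ h₂, heq⟩
      exact .inl (Finset.mem_filter.2 ⟨mem_offDiag, hshallow⟩)
  have card_offDiagonal : (#offDiagonal : ℝ) ≤ 48 * #(D₁ ∪ D₂) * k :=
    card_offDiag_shallow_disks_le hD hk
  have card_union : (#(D₁ ∪ D₂) : ℝ) ≤ #D₁ + #D₂ := by
    exact_mod_cast Finset.card_union_le D₁ D₂
  have hk' : (1 : ℝ) ≤ k := by exact_mod_cast hk
  calc _ ≤ (#(offDiagonal ∪ D₁.diag) : ℝ) := by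
        rw [← Set.ncard_coe_finset]
        exact_mod_cast Set.ncard_le_ncard cover (Finset.finite_toSet _)
    _ ≤ #offDiagonal + #D₁ := by
        exact_mod_cast D₁.diag_card ▸ Finset.card_union_le offDiagonal D₁.diag
    _ ≤ 48 * (#D₁ + #D₂) * k + (#D₁ + #D₂) * k := by
        gcongr
        · exact card_offDiagonal.trans (by gcongr)
        · exact (le_add_of_nonneg_right (Nat.cast_nonneg _)).trans
            (le_mul_of_one_le_right (by positivity) hk')
    _ = 49 * (#D₁ + #D₂) * k := by ring

/-- There is a universal constant `C > 0` such that for any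
two disjoint finite sets `D₁, D₂` of distinct disks with `|D₁| + |D₂| = n` and
any integer `k ≥ 1`, the number of pairs `(d₁, d₂) ∈ D₁ × D₂` admitting a
point `p ∈ d₁ ∩ d₂` of depth at most `k` in `D₁ ∪ D₂` is at most `C·n·k`. -/
theorem bipartite_shallow_edges_count :
    ∃ C : ℝ, 0 < C ∧
      ∀ (D₁ D₂ : Finset (Set Plane)), (∀ d ∈ D₁ ∪ D₂, IsDisk d) →
        Disjoint D₁ D₂ →
      ∀ k : ℕ, 1 ≤ k →
      (({q : Set Plane × Set Plane | q.1 ∈ D₁ ∧ q.2 ∈ D₂ ∧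
          ∃ p : Plane, p ∈ q.1 ∩ q.2 ∧ diskDepth (D₁ ∪ D₂) p ≤ k}).ncard : ℝ)
        ≤ C * (D₁.card + D₂.card) * k := by
  exact ⟨49, by norm_num, fun D₁ D₂ hD _ k hk =>
    bipartite_shallow_edges_count_general D₁ D₂ hD k hk⟩
end
end
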